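/- arXiv:2511.03708 — 13 statements merged into one kernel-verified Lean document; each statement's English description precedes it below -/
import Mathlib

section
/- For every integer M ≥ 2, the function ψ_M attains its infimum over U_M, the optimal value is strictly positive (ψ*_M > 0), and every minimizer u* of ψ_M over U_M lies in the interior of U_M, i.e. 0 < u*_1 < u*_2 < ⋯ < u*_{M−1} < 1. -/
noncomputable def gammaMin (d : ℕ) (β : ℝ) : ℝ := β / (2 * β + d)

noncomputable def gammaMax (d : ℕ) (β : ℝ) : ℝ := (β + d) / (2 * β + d)

noncomputable def Sset (d : ℕ) (β : ℝ) : Set ℝ := Set.Icc (gammaMin d β) (gammaMax d β)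

noncomputable def hFun (M : ℕ) (γ : ℝ) : ℝ := (1 - γ) / (1 - γ ^ M)

/-- η_1(u,γ) = u_1, η_i(u,γ) = u_i − γ·u_{i−1} for 2 ≤ i ≤ M−1, η_M(u,γ) = 1 − γ·u_{M−1}. -/
noncomputable def etaFun (M : ℕ) (u : ℕ → ℝ) (γ : ℝ) (i : ℕ) : ℝ :=
  if i = 1 then u 1 else if i = M then 1 - γ * u (M - 1) else u i - γ * u (i - 1)

/-- Ψ_M(u,γ) = max_{1≤i≤M} η_i(u,γ) − h_M(γ). -/
noncomputable def PsiFun (M : ℕ) (u : ℕ → ℝ) (γ : ℝ) : ℝ :=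
  (⨆ i : Set.Icc 1 M, etaFun M u γ i.1) - hFun M γ

/-- ψ_M(u) = max( u_1, sup_{γ∈𝒮} Ψ_M(u,γ) ). -/
noncomputable def psiFun (d : ℕ) (β : ℝ) (M : ℕ) (u : ℕ → ℝ) : ℝ :=
  max (u 1) (⨆ γ : Sset d β, PsiFun M u γ.1)

/-- U_M = { u : 0 ≤ u_1 ≤ u_2 ≤ ⋯ ≤ u_{M−1} ≤ 1 } (only coordinates 1,…,M−1 matter). -/
def UM (M : ℕ) : Set (ℕ → ℝ) :=
  {u | 0 ≤ u 1 ∧ u (M - 1) ≤ 1 ∧ ∀ i, 1 ≤ i → i + 1 ≤ M - 1 → u i ≤ u (i + 1)}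

/-- ψ*_M = inf_{u ∈ U_M} ψ_M(u). -/
noncomputable def psiStar (d : ℕ) (β : ℝ) (M : ℕ) : ℝ :=
  sInf (psiFun d β M '' UM M)

lemma S_bounds (d : ℕ) (hd : 1 ≤ d) (β : ℝ) (hβ : 0 < β) :
    0 < gammaMin d β ∧ gammaMin d β ≤ gammaMax d β ∧ gammaMax d β < 1 := by
  have hd' : (1 : ℝ) ≤ d := by exact_mod_cast hd
  have h : 0 < 2 * β + d := by linarith
  unfold gammaMin gammaMax
  refine ⟨by positivity, ?_, ?_⟩
  · gcongr; linarith
  · rw [div_lt_one h]; linarith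

lemma h_lower (M : ℕ) (hM : 1 ≤ M) (γ : ℝ) (h0 : 0 < γ) (h1 : γ < 1) : 1 - γ ≤ hFun M γ := by
  have h2 : γ ^ M < 1 := pow_lt_one₀ h0.le h1 (by omega)
  have h3 : 0 < γ ^ M := pow_pos h0 M
  unfold hFun
  rw [le_div_iff₀ (by linarith)]
  nlinarith

noncomputable def FF (d : ℕ) (β : ℝ) (M : ℕ) (x : ℝ) : ℝ :=
  ⨅ γ : Sset d β, (γ.1 * x + hFun M γ.1)

noncomputable def WW (d : ℕ) (β : ℝ) (M : ℕ) (v : ℝ) : ℕ → ℝ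
  | 0 => v
  | n + 1 => FF d β M (WW d β M v n) + v

lemma S_mem {d : ℕ} (hd : 1 ≤ d) {β : ℝ} (hβ : 0 < β) {γ : ℝ} (h : γ ∈ Sset d β) : 0 < γ ∧ γ < 1 := by
  have := S_bounds d hd β hβ
  have h1 := h.1
  have h2 := h.2
  constructor <;> linarith

lemma S_min {d : ℕ} (hd : 1 ≤ d) {β : ℝ} (hβ : 0 < β) : gammaMin d β ∈ Sset d β := ⟨le_rfl, (S_bounds d hd β hβ).2.1⟩

lemma S_nonempty {d : ℕ} (hd : 1 ≤ d) {β : ℝ} (hβ : 0 < β) : Nonempty (Sset d β) := ⟨⟨_, S_min hd hβ⟩⟩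

lemma le_FF {d : ℕ} (hd : 1 ≤ d) {β : ℝ} (hβ : 0 < β) {M : ℕ}
    {x c : ℝ} (h : ∀ γ ∈ Sset d β, c ≤ γ * x + hFun M γ) : c ≤ FF d β M x := by
  have := S_nonempty hd hβ
  exact le_ciInf fun γ => h γ.1 γ.2

lemma FF_le {d : ℕ} (hd : 1 ≤ d) {β : ℝ} (hβ : 0 < β) {M : ℕ} (hM : 2 ≤ M)
    (x : ℝ) {γ : ℝ} (h : γ ∈ Sset d β) : FF d β M x ≤ γ * x + hFun M γ := by
  refine ciInf_le (f := fun γ : Sset d β => (γ.1 * x + hFun M γ.1)) ?_ ⟨γ, h⟩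
  refine ⟨-|x|, ?_⟩
  rintro _ ⟨⟨g, hg⟩, rfl⟩
  obtain ⟨h0, h1⟩ := S_mem hd hβ hg
  have := h_lower M (by omega) g h0 h1
  have := neg_abs_le x
  have := abs_nonneg x
  show -|x| ≤ g * x + hFun M g
  nlinarith

lemma FF_pos {d : ℕ} (hd : 1 ≤ d) {β : ℝ} (hβ : 0 < β) {M : ℕ} (hM : 2 ≤ M)
    {x : ℝ} (hx : 0 ≤ x) : 0 < FF d β M x := by
  have hb := S_bounds d hd β hβ
  refine lt_of_lt_of_le (sub_pos.2 hb.2.2) (le_FF hd hβ fun γ hγ => ?_)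
  obtain ⟨h0, h1⟩ := S_mem hd hβ hγ
  have := h_lower M (by omega) γ h0 h1
  have h2 := hγ.2
  have := mul_nonneg h0.le hx
  linarith

lemma FF_strict {d : ℕ} (hd : 1 ≤ d) {β : ℝ} (hβ : 0 < β) {M : ℕ} (hM : 2 ≤ M)
     : StrictMono (FF d β M) := by
  intro x y hxy
  have hb := S_bounds d hd β hβ
  have : FF d β M x + gammaMin d β * (y - x) ≤ FF d β M y := by
    refine le_FF hd hβ fun γ hγ => ?_
    have := FF_le hd hβ hM x hγ
    have h1 := hγ.1
    nlinarith
  have := mul_pos hb.1 (sub_pos.2 hxy)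
  linarith

lemma FF_cont {d : ℕ} (hd : 1 ≤ d) {β : ℝ} (hβ : 0 < β) {M : ℕ} (hM : 2 ≤ M)
     : Continuous (FF d β M) := by
  have key : ∀ x y, FF d β M x ≤ FF d β M y + |x - y| := by
    intro x y
    have : FF d β M x - |x - y| ≤ FF d β M y := by
      refine le_FF hd hβ fun γ hγ => ?_
      have := FF_le hd hβ hM x hγ
      obtain ⟨h0, h1⟩ := S_mem hd hβ hγ
      have := le_abs_self (x - y)
      have := abs_nonneg (x - y)
      nlinarith
    linarith
  have : LipschitzWith 1 (FF d β M) := by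
    refine LipschitzWith.of_dist_le_mul fun x y => ?_
    rw [Real.dist_eq, Real.dist_eq, abs_le]
    have h1 := key x y
    have h2 := key y x
    rw [abs_sub_comm y x] at h2
    simp only [NNReal.coe_one, one_mul]
    constructor <;> linarith
  exact this.continuous

lemma WW_cont {d : ℕ} (hd : 1 ≤ d) {β : ℝ} (hβ : 0 < β) {M : ℕ} (hM : 2 ≤ M)
    (n : ℕ) : Continuous fun v => WW d β M v n := by
  induction n with
  | zero => exact continuous_id
  | succ n ih => exact ((FF_cont hd hβ hM).comp ih).add continuous_id

lemma WW_strict {d : ℕ} (hd : 1 ≤ d) {β : ℝ} (hβ : 0 < β) {M : ℕ} (hM : 2 ≤ M)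
    (n : ℕ) : StrictMono fun v => WW d β M v n := by
  induction n with
  | zero => exact strictMono_id
  | succ n ih =>
    intro x y hxy
    have := FF_strict hd hβ hM (ih hxy)
    simp only [WW]
    linarith

lemma WW_nonneg {d : ℕ} (hd : 1 ≤ d) {β : ℝ} (hβ : 0 < β) {M : ℕ} (hM : 2 ≤ M)
    {v : ℝ} (hv : 0 ≤ v) (n : ℕ) : 0 ≤ WW d β M v n := by
  induction n with
  | zero => exact hv
  | succ n ih =>
    have := FF_pos hd hβ hM ih
    simp only [WW]
    linarith

lemma WW_step {d : ℕ} (hd : 1 ≤ d) {β : ℝ} (hβ : 0 < β) {M : ℕ} (hM : 2 ≤ M)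
    {v : ℝ} (hv : 0 ≤ v) (n : ℕ) : WW d β M v n < WW d β M v (n + 1) := by
  induction n with
  | zero =>
    have := FF_pos hd hβ hM hv
    simp only [WW]
    linarith
  | succ n ih =>
    have := FF_strict hd hβ hM ih
    simp only [WW] at this ⊢
    linarith

lemma WW_zero_lt {d : ℕ} (hd : 1 ≤ d) {β : ℝ} (hβ : 0 < β) {M : ℕ} (hM : 2 ≤ M)
     : WW d β M 0 (M - 1) < 1 := by
  obtain ⟨h0, h1⟩ := S_mem hd hβ (S_min hd hβ)
  have hm := S_min hd hβ
  set g := gammaMin d β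
  have hp : g ^ M < 1 := pow_lt_one₀ h0.le h1 (by omega)
  have key : ∀ n, WW d β M 0 n ≤ (1 - g ^ n) / (1 - g ^ M) := by
    intro n
    induction n with
    | zero => simp [WW]
    | succ n ih =>
      have h2 := FF_le hd hβ hM (WW d β M 0 n) hm
      have h3 := mul_le_mul_of_nonneg_left ih h0.le
      have h4 : g * ((1 - g ^ n) / (1 - g ^ M)) + hFun M g = (1 - g ^ (n + 1)) / (1 - g ^ M) := by
        unfold hFun
        rw [mul_div_assoc', ← add_div]
        congr 1
        ring
      simp only [WW]
      linarith
  refine lt_of_le_of_lt (key _) ?_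
  rw [div_lt_one (by linarith)]
  have : g ^ M < g ^ (M - 1) := pow_lt_pow_right_of_lt_one₀ h0 h1 (by omega)
  linarith

lemma exists_v {d : ℕ} (hd : 1 ≤ d) {β : ℝ} (hβ : 0 < β) {M : ℕ} (hM : 2 ≤ M)
     : ∃ v, 0 < v ∧ WW d β M v (M - 1) = 1 := by
  have h0 := WW_zero_lt hd hβ hM
  have h1 : 1 ≤ WW d β M 1 (M - 1) := by
    obtain ⟨k, rfl⟩ : ∃ k, M = k + 2 := ⟨M - 2, by omega⟩
    have := FF_pos hd hβ hM (WW_nonneg hd hβ hM zero_le_one k)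
    show 1 ≤ WW d β (k + 2) 1 (k + 1)
    simp only [WW]
    linarith
  obtain ⟨v, hv, e⟩ := intermediate_value_Icc (zero_le_one' ℝ)
    (WW_cont hd hβ hM (M - 1)).continuousOn ⟨h0.le, h1⟩
  refine ⟨v, lt_of_le_of_ne hv.1 ?_, e⟩
  rintro rfl
  simp only at e
  linarith

lemma psi_le_iff {d : ℕ} (hd : 1 ≤ d) {β : ℝ} (hβ : 0 < β) {M : ℕ} (hM : 2 ≤ M)
    (u : ℕ → ℝ) (v : ℝ) : psiFun d β M u ≤ v ↔
    u 1 ≤ v ∧ (∀ i, 1 ≤ i → i + 1 ≤ M - 1 → u (i + 1) ≤ FF d β M (u i) + v) ∧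
      1 ≤ FF d β M (u (M - 1)) + v := by
  have := S_nonempty hd hβ
  have : Nonempty (Set.Icc 1 M) := ⟨⟨1, by simp; omega⟩⟩
  unfold psiFun
  rw [max_le_iff]
  refine and_congr_right fun hu1 => ?_
  have hbdd : BddAbove (Set.range fun γ : Sset d β => PsiFun M u γ.1) := by
    refine ⟨1 + 2 * ∑ j ∈ Finset.range (M + 1), |u j|, ?_⟩
    rintro _ ⟨⟨g, hg⟩, rfl⟩
    obtain ⟨h0, h1⟩ := S_mem hd hβ hg
    have hh := h_lower M (by omega) g h0 h1
    have hs : ∀ j, j ≤ M → |u j| ≤ ∑ j ∈ Finset.range (M + 1), |u j| := fun j hj =>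
      Finset.single_le_sum (f := fun j => |u j|) (fun _ _ => abs_nonneg _)
        (Finset.mem_range.2 (by omega))
    have hg' : ∀ x : ℝ, - (g * x) ≤ |x| := fun x => by
      have := neg_abs_le x
      have := abs_nonneg x
      nlinarith
    have : (⨆ i : Set.Icc 1 M, etaFun M u g i.1) ≤
        1 + 2 * ∑ j ∈ Finset.range (M + 1), |u j| := by
      refine ciSup_le ?_
      rintro ⟨i, hi1, hi2⟩
      have a0 := (abs_nonneg _).trans (hs 0 (by omega))
      unfold etaFun
      dsimp only
      split_ifs
      · have := hs 1 (by omega)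
        have := le_abs_self (u 1)
        linarith
      · have := hs (M - 1) (by omega)
        have := hg' (u (M - 1))
        linarith
      · have := hs i (by omega)
        have := hs (i - 1) (by omega)
        have := hg' (u (i - 1))
        have := le_abs_self (u i)
        linarith
    show (⨆ i : Set.Icc 1 M, etaFun M u g i.1) - hFun M g ≤ _
    linarith
  rw [ciSup_le_iff hbdd]
  have hP : ∀ g, PsiFun M u g ≤ v ↔ ∀ i, 1 ≤ i → i ≤ M → etaFun M u g i ≤ v + hFun M g := by
    intro g
    unfold PsiFun
    rw [sub_le_iff_le_add, ciSup_le_iff (Set.finite_range _).bddAbove]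
    constructor
    · intro h i h1 h2
      exact h ⟨i, h1, h2⟩
    · rintro h ⟨i, h1, h2⟩
      exact h i h1 h2
  constructor
  · intro h
    have h' : ∀ γ ∈ Sset d β, ∀ i, 1 ≤ i → i ≤ M → etaFun M u γ i ≤ v + hFun M γ :=
      fun γ hγ => (hP γ).1 (h ⟨γ, hγ⟩)
    constructor
    · intro i h1 h2
      rw [← sub_le_iff_le_add]
      refine le_FF hd hβ fun γ hγ => ?_
      have := h' γ hγ (i + 1) (by omega) (by omega)
      rw [etaFun, if_neg (by omega), if_neg (by omega), Nat.add_sub_cancel] at this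
      linarith
    · rw [← sub_le_iff_le_add]
      refine le_FF hd hβ fun γ hγ => ?_
      have := h' γ hγ M (by omega) (by omega)
      rw [etaFun, if_neg (by omega), if_pos rfl] at this
      linarith
  · rintro ⟨h1, h2⟩ ⟨γ, hγ⟩
    rw [hP]
    intro i hi1 hi2
    obtain ⟨g0, g1⟩ := S_mem hd hβ hγ
    have hh := h_lower M (by omega) γ g0 g1
    unfold etaFun
    split_ifs with ha hb
    · linarith
    · have := FF_le hd hβ hM (u (M - 1)) hγ
      linarith
    · have := h1 (i - 1) (by omega) (by omega)
      rw [Nat.sub_add_cancel hi1] at this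
      have := FF_le hd hβ hM (u (i - 1)) hγ
      linarith

lemma feas_le {d : ℕ} (hd : 1 ≤ d) {β : ℝ} (hβ : 0 < β) {M : ℕ} (hM : 2 ≤ M)
    {u : ℕ → ℝ} {v : ℝ} (h : psiFun d β M u ≤ v) (n : ℕ) (hn : n + 1 ≤ M - 1) :
    u (n + 1) ≤ WW d β M v n := by
  obtain ⟨h1, h2, -⟩ := (psi_le_iff hd hβ hM u v).1 h
  induction n with
  | zero => exact h1
  | succ n ih =>
    have := h2 (n + 1) (by omega) hn
    have := (FF_strict hd hβ hM).monotone (ih (by omega))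
    simp only [WW]
    linarith

lemma feas_one {d : ℕ} (hd : 1 ≤ d) {β : ℝ} (hβ : 0 < β) {M : ℕ} (hM : 2 ≤ M)
    {u : ℕ → ℝ} {v : ℝ} (h : psiFun d β M u ≤ v) : 1 ≤ WW d β M v (M - 1) := by
  obtain ⟨-, -, h3⟩ := (psi_le_iff hd hβ hM u v).1 h
  obtain ⟨k, rfl⟩ : ∃ k, M = k + 2 := ⟨M - 2, by omega⟩
  have := (FF_strict hd hβ hM).monotone (feas_le hd hβ hM h k (by omega))
  have e : k + 2 - 1 = k + 1 := by omega
  rw [e] at h3 ⊢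
  simp only [WW]
  linarith

lemma feas_eq {d : ℕ} (hd : 1 ≤ d) {β : ℝ} (hβ : 0 < β) {M : ℕ} (hM : 2 ≤ M)
    {u : ℕ → ℝ} {v : ℝ} (h : psiFun d β M u ≤ v) (hv : WW d β M v (M - 1) = 1)
    (k n : ℕ) (hn : n + 2 + k = M) : u (n + 1) = WW d β M v n := by
  obtain ⟨-, h2, h3⟩ := (psi_le_iff hd hβ hM u v).1 h
  have hle := feas_le hd hβ hM h n (by omega)
  by_contra hne
  have hF := FF_strict hd hβ hM (lt_of_le_of_ne hle hne)
  induction k generalizing n with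
  | zero =>
    have e : M - 1 = n + 1 := by omega
    rw [e] at h3 hv
    simp only [WW] at hv
    linarith
  | succ k ih =>
    have h4 := h2 (n + 1) (by omega) (by omega)
    have h5 : u (n + 1 + 1) < WW d β M v (n + 1) := by
      simp only [WW]
      linarith
    exact ih (n + 1) (by omega) h5.le h5.ne (FF_strict hd hβ hM h5)

theorem stmt1 (d : ℕ) (hd : 1 ≤ d) (β : ℝ) (hβ : 0 < β) (M : ℕ) (hM2 : 2 ≤ M) :
    (∃ u ∈ UM M, psiFun d β M u = psiStar d β M) ∧
    0 < psiStar d β M ∧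
    (∀ u ∈ UM M, psiFun d β M u = psiStar d β M →
      0 < u 1 ∧ u (M - 1) < 1 ∧ ∀ i, 1 ≤ i → i + 1 ≤ M - 1 → u i < u (i + 1)) := by
  obtain ⟨v, hv0, hv⟩ := exists_v hd hβ hM2
  have hstep := WW_step hd hβ hM2 hv0.le
  have hlast : WW d β M v (M - 1 - 1) < 1 := by
    have := hstep (M - 1 - 1)
    rwa [Nat.sub_add_cancel (by omega), hv] at this
  have hlow : ∀ u, v ≤ psiFun d β M u := by
    intro u
    have h1 := feas_one hd hβ hM2 (le_refl (psiFun d β M u))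
    rw [← hv] at h1
    exact (WW_strict hd hβ hM2 (M - 1)).le_iff_le.1 h1
  have hw : psiFun d β M (fun i => WW d β M v (i - 1)) ≤ v := by
    rw [psi_le_iff hd hβ hM2]
    refine ⟨le_rfl, ?_, ?_⟩
    · intro i h1 h2
      obtain ⟨j, rfl⟩ : ∃ j, i = j + 1 := ⟨i - 1, by omega⟩
      exact le_rfl
    · obtain ⟨k, rfl⟩ : ∃ k, M = k + 2 := ⟨M - 2, by omega⟩
      exact hv.symm.le
  have hwU : (fun i => WW d β M v (i - 1)) ∈ UM M := by
    refine ⟨hv0.le, hlast.le, ?_⟩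
    intro i h1 h2
    obtain ⟨j, rfl⟩ : ∃ j, i = j + 1 := ⟨i - 1, by omega⟩
    exact (hstep j).le
  have hwe := le_antisymm hw (hlow _)
  have hstar : psiStar d β M = v := by
    refine IsLeast.csInf_eq ⟨⟨_, hwU, hwe⟩, ?_⟩
    rintro _ ⟨u, -, rfl⟩
    exact hlow u
  rw [hstar]
  refine ⟨⟨_, hwU, hwe⟩, hv0, ?_⟩
  intro u _ hu
  have he : ∀ i, 1 ≤ i → i ≤ M - 1 → u i = WW d β M v (i - 1) := by
    intro i h1 h2
    obtain ⟨j, rfl⟩ : ∃ j, i = j + 1 := ⟨i - 1, by omega⟩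
    exact feas_eq hd hβ hM2 hu.le hv (M - (j + 2)) j (by omega)
  refine ⟨?_, ?_, ?_⟩
  · rw [he 1 le_rfl (by omega)]
    exact hv0
  · rw [he (M - 1) (by omega) le_rfl]
    exact hlast
  · intro i h1 h2
    rw [he i h1 (by omega), he (i + 1) (by omega) h2]
    obtain ⟨j, rfl⟩ : ∃ j, i = j + 1 := ⟨i - 1, by omega⟩
    exact hstep j
end

section
/- Let M ≥ 2 be an integer. The function ψ_M has a unique minimizer u* = (u*_1,…,u*_{M−1}) over U_M. Moreover, setting u*_0 = 0 and u*_M = 1, the vector (u*_0, u*_1, …, u*_M) solves the optimality system, and it is the unique solution: if (u_0, u_1, …, u_M) solves the optimality system, then u_i = u*_i for every 0 ≤ i ≤ M. -/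
/-- φ_M(x) = min_{γ∈𝒮} (γ·x + h_M(γ)). -/
noncomputable def phiFun (d : ℕ) (β : ℝ) (M : ℕ) (x : ℝ) : ℝ :=
  sInf ((fun γ => γ * x + hFun M γ) '' Sset d β)

/-- (u_0, …, u_M) solves the optimality system: u_0 = 0, u_M = 1,
0 < u_1 < ⋯ < u_{M−1} < 1, and u_i = u_1 + φ_M(u_{i−1}) for 2 ≤ i ≤ M. -/
def SolvesOptSystem (d : ℕ) (β : ℝ) (M : ℕ) (u : ℕ → ℝ) : Prop :=
  u 0 = 0 ∧ u M = 1 ∧ 0 < u 1 ∧ u (M - 1) < 1 ∧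
  (∀ i, 1 ≤ i → i + 1 ≤ M - 1 → u i < u (i + 1)) ∧
  ∀ i, 2 ≤ i → i ≤ M → u i = u 1 + phiFun d β M (u (i - 1))

lemma hFun_ge (M : ℕ) (hM : 2 ≤ M) (γ : ℝ) (h0 : 0 < γ) (h1 : γ < 1) : 1 - γ ≤ hFun M γ := by
  have h2 : γ ^ M < 1 := pow_lt_one₀ h0.le h1 (by omega)
  have h3 : 0 < γ ^ M := by positivity
  unfold hFun
  rw [le_div_iff₀ (by linarith)]
  nlinarith

lemma phi_le (d : ℕ) (hd : 1 ≤ d) (β : ℝ) (hβ : 0 < β) (M : ℕ) (hM : 2 ≤ M) (x γ : ℝ)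
    (hγ : γ ∈ Sset d β) : phiFun d β M x ≤ γ * x + hFun M γ := by
  obtain ⟨a, b, c⟩ := S_bounds d hd β hβ
  refine csInf_le ⟨-|x|, ?_⟩ ⟨γ, hγ, rfl⟩
  rintro _ ⟨g, hg, rfl⟩
  have g0 : 0 < g := lt_of_lt_of_le a hg.1
  have g1 : g < 1 := lt_of_le_of_lt hg.2 c
  have := hFun_ge M hM g g0 g1
  have h2 := neg_abs_le x
  have h3 := abs_nonneg x
  simp only
  nlinarith

lemma le_phi (d : ℕ) (hd : 1 ≤ d) (β : ℝ) (hβ : 0 < β) (M : ℕ) (x c : ℝ)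
    (h : ∀ γ ∈ Sset d β, c ≤ γ * x + hFun M γ) : c ≤ phiFun d β M x := by
  obtain ⟨a, b, c⟩ := S_bounds d hd β hβ
  refine le_csInf ⟨_, gammaMin d β, ⟨le_rfl, b⟩, rfl⟩ ?_
  rintro _ ⟨g, hg, rfl⟩
  exact h g hg

lemma phi_strictMono (d : ℕ) (hd : 1 ≤ d) (β : ℝ) (hβ : 0 < β) (M : ℕ) (hM : 2 ≤ M) :
    StrictMono (phiFun d β M) := by
  intro x y hxy
  obtain ⟨a, b, c⟩ := S_bounds d hd β hβ
  have : phiFun d β M x + gammaMin d β * (y - x) ≤ phiFun d β M y := by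
    apply le_phi d hd β hβ
    intro γ hγ
    have := phi_le d hd β hβ M hM x γ hγ
    have := hγ.1
    nlinarith
  nlinarith [mul_pos a (sub_pos.2 hxy)]

lemma phi_cont (d : ℕ) (hd : 1 ≤ d) (β : ℝ) (hβ : 0 < β) (M : ℕ) (hM : 2 ≤ M) :
    Continuous (phiFun d β M) := by
  obtain ⟨a, b, c⟩ := S_bounds d hd β hβ
  have : LipschitzWith 1 (phiFun d β M) := by
    apply LipschitzWith.of_le_add
    intro x y
    rw [← sub_le_iff_le_add]
    apply le_phi d hd β hβ
    intro γ hγ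
    have h1 := phi_le d hd β hβ M hM x γ hγ
    have g0 : 0 < γ := lt_of_lt_of_le a hγ.1
    have g1 : γ < 1 := lt_of_le_of_lt hγ.2 c
    rw [Real.dist_eq]
    have h2 := le_abs_self (x - y)
    have h3 := abs_nonneg (x - y)
    nlinarith
  exact this.continuous

lemma phi_pos (d : ℕ) (hd : 1 ≤ d) (β : ℝ) (hβ : 0 < β) (M : ℕ) (hM : 2 ≤ M) (x : ℝ)
    (hx : 0 ≤ x) : 0 < phiFun d β M x := by
  obtain ⟨a, b, c⟩ := S_bounds d hd β hβ
  have : 1 - gammaMax d β ≤ phiFun d β M x := by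
    apply le_phi d hd β hβ
    intro γ hγ
    have g0 : 0 < γ := lt_of_lt_of_le a hγ.1
    have g1 : γ < 1 := lt_of_le_of_lt hγ.2 c
    have := hFun_ge M hM γ g0 g1
    have := hγ.2
    have := mul_nonneg g0.le hx
    linarith
  linarith

/-- the shooting sequence: `shoot t 0` is the first coordinate. -/
noncomputable def shoot (d : ℕ) (β : ℝ) (M : ℕ) (t : ℝ) : ℕ → ℝ
  | 0 => t
  | n + 1 => t + phiFun d β M (shoot d β M t n)

/-- u extended by 1 at M -/
noncomputable def ext1 (M : ℕ) (u : ℕ → ℝ) (i : ℕ) : ℝ := if i = M then 1 else u i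

lemma eta_eq (M : ℕ) (u : ℕ → ℝ) (γ : ℝ) (i : ℕ) (hi : 2 ≤ i) (hiM : i ≤ M) :
    etaFun M u γ i = ext1 M u i - γ * ext1 M u (i - 1) := by
  unfold etaFun ext1
  rw [if_neg (by omega), if_neg (c := i - 1 = M) (by omega)]
  by_cases h : i = M
  · subst h; simp
  · simp [h]

lemma Psi_ge (M : ℕ) (u : ℕ → ℝ) (γ : ℝ) (i : ℕ) (hi : 1 ≤ i) (hiM : i ≤ M) :
    etaFun M u γ i - hFun M γ ≤ PsiFun M u γ := by
  unfold PsiFun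
  have := le_ciSup (f := fun i : Set.Icc 1 M => etaFun M u γ i.1) (Set.finite_range _).bddAbove
    ⟨i, hi, hiM⟩
  simpa using this

lemma psi_ge_one (d : ℕ) (β : ℝ) (M : ℕ) (u : ℕ → ℝ) : u 1 ≤ psiFun d β M u := le_max_left _ _

lemma psi_ge (d : ℕ) (hd : 1 ≤ d) (β : ℝ) (hβ : 0 < β) (M : ℕ) (hM : 2 ≤ M) (u : ℕ → ℝ)
    (i : ℕ) (hi : 2 ≤ i) (hiM : i ≤ M) :
    ext1 M u i ≤ psiFun d β M u + phiFun d β M (ext1 M u (i - 1)) := by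
  obtain ⟨a, b, c⟩ := S_bounds d hd β hβ
  rw [← sub_le_iff_le_add']
  apply le_phi d hd β hβ
  intro γ hγ
  obtain ⟨C, hC⟩ := ((Finset.range (M+1)).image (fun j => |u j|)).bddAbove
  have hC' : ∀ j ≤ M, |u j| ≤ C := fun j hj => hC (by
    simp only [Finset.coe_image, Set.mem_image, Finset.coe_range, Set.mem_Iio]
    exact ⟨j, by omega, rfl⟩)
  have hbdd : BddAbove (Set.range fun γ : Sset d β => PsiFun M u γ.1) := by
    refine ⟨1 + 2 * C, ?_⟩
    rintro _ ⟨⟨g, hg⟩, rfl⟩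
    have g0 : 0 < g := lt_of_lt_of_le a hg.1
    have g1 : g < 1 := lt_of_le_of_lt hg.2 c
    have h1 := hFun_ge M hM g g0 g1
    have : Nonempty (Set.Icc 1 M) := ⟨⟨1, by simp; omega⟩⟩
    have h2 : (⨆ i : Set.Icc 1 M, etaFun M u g i.1) ≤ 1 + 2 * C := by
      apply ciSup_le
      rintro ⟨j, hj1, hj2⟩
      have e1 := abs_le.1 (hC' 1 (by omega))
      have e2 := abs_le.1 (hC' j hj2)
      have e3 := abs_le.1 (hC' (j-1) (by omega))
      have e4 := abs_le.1 (hC' (M-1) (by omega))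
      simp only [etaFun]
      split_ifs
      · linarith
      · nlinarith
      · nlinarith
    simp only [PsiFun]
    linarith
  have h1 := le_ciSup hbdd ⟨γ, hγ⟩
  have h2 := Psi_ge M u γ i (by omega) hiM
  rw [eta_eq M u γ i hi hiM] at h2
  have h3 : (⨆ γ : Sset d β, PsiFun M u γ.1) ≤ psiFun d β M u := le_max_right _ _
  simp only at h1
  linarith

lemma psi_le (d : ℕ) (hd : 1 ≤ d) (β : ℝ) (hβ : 0 < β) (M : ℕ) (hM : 2 ≤ M) (u : ℕ → ℝ) (t : ℝ)
    (h1 : u 1 ≤ t) (h2 : ∀ i, 2 ≤ i → i ≤ M →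
      ext1 M u i ≤ t + phiFun d β M (ext1 M u (i - 1))) : psiFun d β M u ≤ t := by
  obtain ⟨a, b, c⟩ := S_bounds d hd β hβ
  have : Nonempty (Sset d β) := ⟨⟨gammaMin d β, le_rfl, b⟩⟩
  refine max_le h1 (ciSup_le ?_)
  rintro ⟨g, hg⟩
  have g0 : 0 < g := lt_of_lt_of_le a hg.1
  have g1 : g < 1 := lt_of_le_of_lt hg.2 c
  have h3 := hFun_ge M hM g g0 g1
  have : Nonempty (Set.Icc 1 M) := ⟨⟨1, by simp; omega⟩⟩
  have h2 : (⨆ i : Set.Icc 1 M, etaFun M u g i.1) ≤ t + hFun M g := by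
    apply ciSup_le
    rintro ⟨j, hj1, hj2⟩
    by_cases hj : j = 1
    · subst hj; simp only [etaFun, if_true]; linarith
    · simp only
      rw [eta_eq M u g j (by omega) hj2]
      have := h2 j (by omega) hj2
      have := phi_le d hd β hβ M hM (ext1 M u (j-1)) g hg
      linarith
  simp only [PsiFun]
  linarith

lemma shoot_cont (d : ℕ) (hd : 1 ≤ d) (β : ℝ) (hβ : 0 < β) (M : ℕ) (hM : 2 ≤ M) (n : ℕ) :
    Continuous (fun t => shoot d β M t n) := by
  induction n with
  | zero => exact continuous_id
  | succ n ih => exact continuous_id.add ((phi_cont d hd β hβ M hM).comp ih)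

lemma shoot_mono (d : ℕ) (hd : 1 ≤ d) (β : ℝ) (hβ : 0 < β) (M : ℕ) (hM : 2 ≤ M) (n : ℕ) :
    StrictMono (fun t => shoot d β M t n) := by
  induction n with
  | zero => exact strictMono_id
  | succ n ih => exact strictMono_id.add ((phi_strictMono d hd β hβ M hM).comp ih)

lemma shoot_zero (d : ℕ) (hd : 1 ≤ d) (β : ℝ) (hβ : 0 < β) (M : ℕ) (hM : 2 ≤ M) :
    shoot d β M 0 (M - 1) < 1 := by
  obtain ⟨a, b, c⟩ := S_bounds d hd β hβ
  set g := gammaMin d β with hg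
  have g1 : g < 1 := by linarith
  have key : ∀ n, shoot d β M 0 n ≤ (1 - g ^ n) / (1 - g ^ M) := by
    intro n
    have h2 : g ^ M < 1 := pow_lt_one₀ a.le g1 (by omega)
    induction n with
    | zero => simp [shoot]
    | succ n ih =>
      have h := phi_le d hd β hβ M hM (shoot d β M 0 n) g ⟨le_rfl, b⟩
      simp only [shoot, zero_add]
      refine h.trans ?_
      have e : (1 - g ^ (n+1)) / (1 - g ^ M) = g * ((1 - g ^ n) / (1 - g ^ M)) + hFun M g := by
        unfold hFun
        field_simp
        ring
      rw [e]
      gcongr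
  refine (key _).trans_lt ?_
  have h2 : g ^ M < 1 := pow_lt_one₀ a.le g1 (by omega)
  rw [div_lt_one (by linarith)]
  have : g ^ M < g ^ (M - 1) := pow_lt_pow_right_of_lt_one₀ a g1 (by omega)
  linarith

lemma shoot_lt (d : ℕ) (hd : 1 ≤ d) (β : ℝ) (hβ : 0 < β) (M : ℕ) (hM : 2 ≤ M) (t : ℝ)
    (ht : 0 ≤ t) (n : ℕ) : shoot d β M t n < shoot d β M t (n + 1) := by
  induction n with
  | zero => simpa [shoot] using phi_pos d hd β hβ M hM t ht
  | succ n ih =>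
    have := phi_strictMono d hd β hβ M hM ih
    simp only [shoot] at this ⊢
    linarith

lemma solves_shoot (d : ℕ) (β : ℝ) (M : ℕ) (w : ℕ → ℝ)
    (h : ∀ i, 2 ≤ i → i ≤ M → w i = w 1 + phiFun d β M (w (i - 1))) :
    ∀ n, n + 1 ≤ M → w (n + 1) = shoot d β M (w 1) n := by
  intro n
  induction n with
  | zero => intro _; rfl
  | succ n ih =>
    intro hn
    rw [h (n+1+1) (by omega) hn, shoot, ← ih (by omega)]; rfl

lemma le_shoot (d : ℕ) (hd : 1 ≤ d) (β : ℝ) (hβ : 0 < β) (M : ℕ) (hM : 2 ≤ M) (w : ℕ → ℝ) (t : ℝ)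
    (h1 : w 1 ≤ t) (h : ∀ i, 2 ≤ i → i ≤ M → w i ≤ t + phiFun d β M (w (i - 1))) :
    ∀ n, n + 1 ≤ M → w (n + 1) ≤ shoot d β M t n := by
  intro n
  induction n with
  | zero => intro _; exact h1
  | succ n ih =>
    intro hn
    have := h (n+1+1) (by omega) hn
    have h3 := (phi_strictMono d hd β hβ M hM).monotone (ih (by omega))
    simp only [shoot]
    simp only [Nat.add_sub_cancel] at this
    linarith

theorem stmt4 (d : ℕ) (hd : 1 ≤ d) (β : ℝ) (hβ : 0 < β) (M : ℕ) (hM2 : 2 ≤ M) :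
    ∃ u : ℕ → ℝ, u ∈ UM M ∧ psiFun d β M u = psiStar d β M ∧
      (∀ v ∈ UM M, psiFun d β M v = psiStar d β M →
        ∀ i, 1 ≤ i → i ≤ M - 1 → v i = u i) ∧
      ∀ uext : ℕ → ℝ,
        (uext 0 = 0 ∧ uext M = 1 ∧ ∀ i, 1 ≤ i → i ≤ M - 1 → uext i = u i) →
        SolvesOptSystem d β M uext ∧
          ∀ w : ℕ → ℝ, SolvesOptSystem d β M w → ∀ i ≤ M, w i = uext i := by
  obtain ⟨m, rfl⟩ : ∃ m, M = m + 2 := ⟨M - 2, by omega⟩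
  set M := m + 2 with hM
  have hM1 : M - 1 = m + 1 := by omega
  -- the root
  obtain ⟨t, ht0, ht⟩ : ∃ t, 0 < t ∧ shoot d β M t (m + 1) = 1 := by
    have hz := shoot_zero d hd β hβ M hM2
    rw [hM1] at hz
    have h1 : 1 ≤ shoot d β M 1 (m + 1) := by
      have hm := (strictMono_nat_of_lt_succ (shoot_lt d hd β hβ M hM2 1 zero_le_one)).monotone
        (Nat.zero_le (m+1))
      simpa [shoot] using hm
    obtain ⟨t, ⟨ht, _⟩, h⟩ := intermediate_value_Icc (zero_le_one' ℝ)
      (shoot_cont d hd β hβ M hM2 (m+1)).continuousOn ⟨hz.le, h1⟩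
    refine ⟨t, lt_of_le_of_ne ht ?_, h⟩
    rintro rfl
    simp only at h
    linarith
  have hsm : StrictMono (shoot d β M t) := strictMono_nat_of_lt_succ (shoot_lt d hd β hβ M hM2 t ht0.le)
  -- the minimizer
  set u : ℕ → ℝ := fun i => shoot d β M t (i - 1) with hu
  have hext : ext1 M u = u := by
    funext i
    unfold ext1
    split_ifs with h
    · rw [h]; simp only [hu]; rw [hM1, ht]
    · rfl
  have hrec : ∀ i, 2 ≤ i → u i = t + phiFun d β M (u (i - 1)) := by
    intro i hi
    obtain ⟨k, rfl⟩ : ∃ k, i = k + 2 := ⟨i - 2, by omega⟩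
    rfl
  have huU : u ∈ UM M := by
    refine ⟨ht0.le, ?_, ?_⟩
    · rw [← ht]; exact hsm.monotone (by omega)
    · intro i _ _
      exact hsm.monotone (by omega)
  have hle : psiFun d β M u ≤ t := by
    apply psi_le d hd β hβ M hM2 u t le_rfl
    intro i hi _
    rw [hext]; exact (hrec i hi).le
  have hlow : ∀ v : ℕ → ℝ, t ≤ psiFun d β M v := by
    intro v
    have h := le_shoot d hd β hβ M hM2 (ext1 M v) (psiFun d β M v)
      (by simpa [ext1, hM] using psi_ge_one d β M v)
      (fun i hi hiM => psi_ge d hd β hβ M hM2 v i hi hiM) (m+1) le_rfl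
    have h' : ext1 M v (m + 1 + 1) = 1 := by simp [ext1, hM]
    rw [h', ← ht] at h
    exact (shoot_mono d hd β hβ M hM2 (m+1)).le_iff_le.1 h
  have hstar : psiStar d β M = t := by
    apply le_antisymm
    · refine le_trans (csInf_le ⟨t, ?_⟩ ⟨u, huU, rfl⟩) hle
      rintro _ ⟨v, _, rfl⟩
      exact hlow v
    · exact le_csInf ⟨_, u, huU, rfl⟩ (by rintro _ ⟨v, _, rfl⟩; exact hlow v)
  refine ⟨u, huU, ?_, ?_, ?_⟩
  · rw [hstar]; exact le_antisymm hle (hlow u)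
  · intro v _ hv
    rw [hstar] at hv
    have hg := fun i hi hiM => psi_ge d hd β hβ M hM2 v i hi hiM
    have h := le_shoot d hd β hβ M hM2 (ext1 M v) t
      (by
        have h1 := psi_ge_one d β M v
        rw [hv] at h1
        simpa [ext1, hM] using h1)
      (fun i hi hiM => hv ▸ psi_ge d hd β hβ M hM2 v i hi hiM)
    have back : ∀ k, k ≤ m + 1 → u (m + 2 - k) ≤ ext1 M v (m + 2 - k) := by
      intro k
      induction k with
      | zero =>
        intro _
        rw [← hext]; simp [ext1, hM]
      | succ k ih =>
        intro hk
        have h1 := ih (by omega)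
        have h2 := hg (m + 2 - k) (by omega) (by omega)
        rw [hrec _ (by omega)] at h1
        rw [hv] at h2
        have h3 : phiFun d β M (u (m + 2 - k - 1)) ≤ phiFun d β M (ext1 M v (m + 2 - k - 1)) := by
          linarith
        exact (phi_strictMono d hd β hβ M hM2).le_iff_le.1 h3
    intro i hi hiM
    have e : ext1 M v i = v i := by unfold ext1; rw [if_neg (by omega)]
    apply le_antisymm
    · have := h (i - 1) (by omega)
      rw [Nat.sub_add_cancel hi, e] at this
      exact this
    · have := back (m + 2 - i) (by omega)
      rw [show m + 2 - (m + 2 - i) = i by omega, e] at this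
      exact this
  · rintro w0 ⟨h0, hMM, hmid⟩
    have hall : ∀ i, 1 ≤ i → i ≤ M → w0 i = u i := by
      intro i hi hiM
      by_cases h : i = M
      · rw [h, hMM, ← hext]; simp [ext1]
      · exact hmid i hi (by omega)
    refine ⟨⟨h0, hMM, ?_, ?_, ?_, ?_⟩, ?_⟩
    · rw [hall 1 le_rfl (by omega)]; exact ht0
    · rw [hall _ (by omega) (by omega), ← ht]; exact hsm (by omega)
    · intro i hi hi2
      rw [hall i hi (by omega), hall (i+1) (by omega) (by omega)]
      exact hsm (by omega)
    · intro i hi hiM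
      rw [hall i (by omega) hiM, hall 1 le_rfl (by omega), hall (i-1) (by omega) (by omega)]
      exact hrec i hi
    · rintro w ⟨w0', wM, -, -, -, wr⟩ i hiM
      have hs := solves_shoot d β M w wr
      have hw1 : w 1 = t := by
        apply (shoot_mono d hd β hβ M hM2 (m+1)).injective
        simp only
        rw [← hs (m+1) le_rfl, ht]; exact wM
      rcases Nat.eq_zero_or_pos i with rfl | hi
      · rw [w0', h0]
      · rw [hall i hi hiM]
        have := hs (i - 1) (by omega)
        rw [Nat.sub_add_cancel hi, hw1] at this
        exact this
end

section
/- For every integer M with 2 ≤ M ≤ 4, the optimal exponent is strictly decreasing in the batch budget: ψ*_{M+1} < ψ*_M. -/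
lemma gm_pos (d : ℕ) (β : ℝ) (hβ : 0 < β) : 0 < gammaMin d β := by
  unfold gammaMin; positivity

lemma gm_half (d : ℕ) (β : ℝ) (hβ : 0 < β) : gammaMin d β ≤ 1 / 2 := by
  unfold gammaMin
  rw [div_le_div_iff₀ (by positivity) (by norm_num)]
  have : (0 : ℝ) ≤ d := by positivity
  linarith

lemma gM_eq (d : ℕ) (β : ℝ) (hβ : 0 < β) : gammaMax d β = 1 - gammaMin d β := by
  unfold gammaMin gammaMax
  have : (2 * β + d : ℝ) ≠ 0 := by positivity
  field_simp
  ring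

lemma psi_nonneg (d : ℕ) (β : ℝ) (M : ℕ) (u : ℕ → ℝ) (hu : u ∈ UM M) : 0 ≤ psiFun d β M u :=
  le_trans hu.1 (le_max_left _ _)

lemma upper_gen (d : ℕ) (β : ℝ) (hβ : 0 < β) (N : ℕ) (hN : 1 ≤ N) (u : ℕ → ℝ) (hu : u ∈ UM N) (c : ℝ)
    (h1 : u 1 ≤ c)
    (h : ∀ γ, gammaMin d β ≤ γ → γ ≤ 1 - gammaMin d β → ∀ i, 1 ≤ i → i ≤ N →
      etaFun N u γ i ≤ c + hFun N γ) : psiStar d β N ≤ c := by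
  have h2 : psiFun d β N u ≤ c := by
    unfold psiFun
    refine max_le h1 ?_
    have : Nonempty (Sset d β) := ⟨⟨gammaMin d β, by
      unfold Sset
      rw [gM_eq d β hβ]
      have := gm_half d β hβ
      constructor <;> linarith⟩⟩
    refine ciSup_le ?_
    rintro ⟨γ, hγ⟩
    unfold Sset at hγ
    rw [gM_eq d β hβ] at hγ
    have : Nonempty (Set.Icc 1 N) := ⟨⟨1, by constructor <;> omega⟩⟩
    unfold PsiFun
    have : (⨆ i : Set.Icc 1 N, etaFun N u γ i.1) ≤ c + hFun N γ := by
      refine ciSup_le ?_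
      rintro ⟨i, hi⟩
      exact h γ hγ.1 hγ.2 i hi.1 hi.2
    simp only
    linarith
  refine le_trans (csInf_le ⟨0, ?_⟩ ⟨u, hu, rfl⟩) h2
  rintro _ ⟨v, hv, rfl⟩
  exact psi_nonneg d β N v hv

lemma um_bounds (M : ℕ) (u : ℕ → ℝ) (hu : u ∈ UM M) :
    ∀ k i, 1 ≤ i → i + k = M - 1 → 0 ≤ u i ∧ u i ≤ 1 := by
  obtain ⟨h0, h1, h2⟩ := hu
  have hA : ∀ k, k + 1 ≤ M - 1 → 0 ≤ u (k + 1) := by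
    intro k
    induction k with
    | zero => intro _; simpa using h0
    | succ k ih => intro hk; exact le_trans (ih (by omega)) (h2 (k + 1) (by omega) hk)
  intro k
  induction k with
  | zero =>
    intro i hi hk
    obtain ⟨j, rfl⟩ : ∃ j, i = j + 1 := ⟨i - 1, by omega⟩
    refine ⟨hA j (by omega), ?_⟩
    rw [show j + 1 = M - 1 by omega]; exact h1
  | succ k ih =>
    intro i hi hk
    obtain ⟨j, rfl⟩ : ∃ j, i = j + 1 := ⟨i - 1, by omega⟩
    refine ⟨hA j (by omega), ?_⟩
    exact le_trans (h2 _ hi (by omega)) (ih (j + 1 + 1) (by omega) (by omega)).2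

lemma eta_le_one (M : ℕ) (hM : 2 ≤ M) (u : ℕ → ℝ) (hu : u ∈ UM M) (γ : ℝ) (hγ : 0 ≤ γ) (i : ℕ)
    (hi : 1 ≤ i) (hiM : i ≤ M) : etaFun M u γ i ≤ 1 := by
  have hb := um_bounds M u hu
  unfold etaFun
  split_ifs with h1 h2
  · exact (hb (M - 1 - 1) 1 le_rfl (by omega)).2
  · have := mul_nonneg hγ (hb 0 (M - 1) (by omega) (by omega)).1
    linarith
  · have := mul_nonneg hγ (hb (M - 1 - (i - 1)) (i - 1) (by omega) (by omega)).1
    have := (hb (M - 1 - i) i (by omega) (by omega)).2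
    linarith

lemma lower_gen (d : ℕ) (β : ℝ) (hβ : 0 < β) (M : ℕ) (hM : 2 ≤ M) (u : ℕ → ℝ) (hu : u ∈ UM M)
    (γ : ℝ) (h1 : gammaMin d β ≤ γ) (h2 : γ ≤ 1 - gammaMin d β) (i : ℕ) (hi : 1 ≤ i) (hiM : i ≤ M) :
    etaFun M u γ i ≤ psiFun d β M u + hFun M γ := by
  have hpos := gm_pos d β hβ
  have hg : γ ∈ Sset d β := by
    unfold Sset; rw [gM_eq d β hβ]; exact ⟨h1, h2⟩
  have : Nonempty (Set.Icc 1 M) := ⟨⟨1, by constructor <;> omega⟩⟩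
  have hB : BddAbove (Set.range fun γ : Sset d β => PsiFun M u γ.1) := by
    refine ⟨1, ?_⟩
    rintro _ ⟨⟨g, hgS⟩, rfl⟩
    unfold Sset at hgS
    rw [gM_eq d β hβ] at hgS
    have hg0 : 0 ≤ g := by linarith [hgS.1]
    have hg1 : g ≤ 1 := by linarith [hgS.2]
    have hh : 0 ≤ hFun M g := by
      unfold hFun
      exact div_nonneg (by linarith) (by linarith [pow_le_one₀ hg0 hg1 (n := M)])
    have : (⨆ i : Set.Icc 1 M, etaFun M u g i.1) ≤ 1 :=
      ciSup_le fun i => eta_le_one M hM u hu g hg0 i.1 i.2.1 i.2.2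
    simp only [PsiFun]
    linarith
  have hA : PsiFun M u γ ≤ psiFun d β M u :=
    le_trans (le_ciSup hB ⟨γ, hg⟩) (le_max_right _ _)
  have hC : etaFun M u γ i ≤ (⨆ i : Set.Icc 1 M, etaFun M u γ i.1) :=
    le_ciSup (f := fun i : Set.Icc 1 M => etaFun M u γ i.1) (Set.finite_range _).bddAbove ⟨i, hi, hiM⟩
  unfold PsiFun at hA
  linarith

lemma um_nonempty (M : ℕ) : (UM M).Nonempty := ⟨fun _ => 0, by simp [UM]⟩

lemma star_ge (d : ℕ) (β : ℝ) (M : ℕ) (c : ℝ) (h : ∀ u ∈ UM M, c ≤ psiFun d β M u) :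
    c ≤ psiStar d β M := by
  refine le_csInf ((um_nonempty M).image _) ?_
  rintro _ ⟨u, hu, rfl⟩
  exact h u hu

lemma h_ge (N : ℕ) (γ x c : ℝ) (h0 : 0 ≤ γ) (h1 : γ < 1) (hN : 1 ≤ N)
    (h : (x - c) * ∑ j ∈ Finset.range N, γ ^ j ≤ 1) : x ≤ c + hFun N γ := by
  have hp : γ ^ N < 1 := pow_lt_one₀ h0 h1 (by omega)
  have : x - c ≤ hFun N γ := by
    unfold hFun
    rw [le_div_iff₀ (by linarith)]
    have := mul_neg_geom_sum γ N
    rw [← this]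
    nlinarith
  linarith

/-- Nonnegativity of the degree 3 Bernstein basis on an interval. -/
lemma bern3 (l r x : ℝ) (h0 : l ≤ x) (h1 : x ≤ r) :
    0 ≤ (x - l) ^ 0 * (r - x) ^ 3 ∧ 0 ≤ (x - l) ^ 1 * (r - x) ^ 2 ∧ 0 ≤ (x - l) ^ 2 * (r - x) ^ 1 ∧ 0 ≤ (x - l) ^ 3 * (r - x) ^ 0 := by
  have e0 := sub_nonneg.2 h0
  have e1 := sub_nonneg.2 h1
  refine ⟨?_, ?_, ?_, ?_⟩ <;> positivity

/-- Nonnegativity of the degree 4 Bernstein basis on an interval. -/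
lemma bern4 (l r x : ℝ) (h0 : l ≤ x) (h1 : x ≤ r) :
    0 ≤ (x - l) ^ 0 * (r - x) ^ 4 ∧ 0 ≤ (x - l) ^ 1 * (r - x) ^ 3 ∧ 0 ≤ (x - l) ^ 2 * (r - x) ^ 2 ∧ 0 ≤ (x - l) ^ 3 * (r - x) ^ 1 ∧ 0 ≤ (x - l) ^ 4 * (r - x) ^ 0 := by
  have e0 := sub_nonneg.2 h0
  have e1 := sub_nonneg.2 h1
  refine ⟨?_, ?_, ?_, ?_, ?_⟩ <;> positivity

/-- Nonnegativity of the degree 5 Bernstein basis on an interval. -/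
lemma bern5 (l r x : ℝ) (h0 : l ≤ x) (h1 : x ≤ r) :
    0 ≤ (x - l) ^ 0 * (r - x) ^ 5 ∧ 0 ≤ (x - l) ^ 1 * (r - x) ^ 4 ∧ 0 ≤ (x - l) ^ 2 * (r - x) ^ 3 ∧ 0 ≤ (x - l) ^ 3 * (r - x) ^ 2 ∧ 0 ≤ (x - l) ^ 4 * (r - x) ^ 1 ∧ 0 ≤ (x - l) ^ 5 * (r - x) ^ 0 := by
  have e0 := sub_nonneg.2 h0
  have e1 := sub_nonneg.2 h1
  refine ⟨?_, ?_, ?_, ?_, ?_, ?_⟩ <;> positivity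

/-- Explicit feasible point with 3 batches. -/
lemma upper3 (d : ℕ) (β : ℝ) (hβ : 0 < β) (a c u2 : ℝ) (ha : a ≤ gammaMin d β) (hc : 0 ≤ c)
    (m1 : c ≤ u2) (m2 : u2 ≤ 1)
    (h : ∀ x, a ≤ x → x ≤ 1 - a → (u2 - x * c - c) * ∑ j ∈ Finset.range 3, x ^ j ≤ 1 ∧
      (1 - x * u2 - c) * ∑ j ∈ Finset.range 3, x ^ j ≤ 1) :
    psiStar d β 3 ≤ c := by
  have hpos := gm_pos d β hβ
  refine upper_gen d β hβ 3 (by norm_num) (fun i => if i = 1 then c else u2) ?_ _ ?_ ?_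
  · refine ⟨by simpa using hc, by simpa using m2, ?_⟩
    intro i hi hi2
    have hi3 : i ≤ 1 := by omega
    interval_cases i <;> simpa
  · simp
  · intro γ hγ0 hγ1 i hi hi2
    refine h_ge 3 γ _ _ (by linarith) (by linarith) (by norm_num) ?_
    obtain ⟨p1, p2⟩ := h γ (by linarith) (by linarith)
    interval_cases i
    · simp [etaFun]
    · simpa [etaFun] using p1
    · simpa [etaFun] using p2

/-- Explicit feasible point with 4 batches. -/
lemma upper4 (d : ℕ) (β : ℝ) (hβ : 0 < β) (a c u2 u3 : ℝ) (ha : a ≤ gammaMin d β) (hc : 0 ≤ c)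
    (m1 : c ≤ u2) (m2 : u2 ≤ u3) (m3 : u3 ≤ 1)
    (h : ∀ x, a ≤ x → x ≤ 1 - a → (u2 - x * c - c) * ∑ j ∈ Finset.range 4, x ^ j ≤ 1 ∧
      (u3 - x * u2 - c) * ∑ j ∈ Finset.range 4, x ^ j ≤ 1 ∧
      (1 - x * u3 - c) * ∑ j ∈ Finset.range 4, x ^ j ≤ 1) :
    psiStar d β 4 ≤ c := by
  have hpos := gm_pos d β hβ
  refine upper_gen d β hβ 4 (by norm_num) (fun i => if i = 1 then c else if i = 2 then u2 else u3) ?_ _ ?_ ?_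
  · refine ⟨by simpa using hc, by simpa using m3, ?_⟩
    intro i hi hi2
    have hi3 : i ≤ 2 := by omega
    interval_cases i <;> simpa
  · simp
  · intro γ hγ0 hγ1 i hi hi2
    refine h_ge 4 γ _ _ (by linarith) (by linarith) (by norm_num) ?_
    obtain ⟨p1, p2, p3⟩ := h γ (by linarith) (by linarith)
    interval_cases i
    · simp [etaFun]
    · simpa [etaFun] using p1
    · simpa [etaFun] using p2
    · simpa [etaFun] using p3

/-- Explicit feasible point with 5 batches. -/
lemma upper5 (d : ℕ) (β : ℝ) (hβ : 0 < β) (a c u2 u3 u4 : ℝ) (ha : a ≤ gammaMin d β) (hc : 0 ≤ c)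
    (m1 : c ≤ u2) (m2 : u2 ≤ u3) (m3 : u3 ≤ u4) (m4 : u4 ≤ 1)
    (h : ∀ x, a ≤ x → x ≤ 1 - a → (u2 - x * c - c) * ∑ j ∈ Finset.range 5, x ^ j ≤ 1 ∧
      (u3 - x * u2 - c) * ∑ j ∈ Finset.range 5, x ^ j ≤ 1 ∧
      (u4 - x * u3 - c) * ∑ j ∈ Finset.range 5, x ^ j ≤ 1 ∧
      (1 - x * u4 - c) * ∑ j ∈ Finset.range 5, x ^ j ≤ 1) :
    psiStar d β 5 ≤ c := by
  have hpos := gm_pos d β hβ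
  refine upper_gen d β hβ 5 (by norm_num) (fun i => if i = 1 then c else if i = 2 then u2 else if i = 3 then u3 else u4) ?_ _ ?_ ?_
  · refine ⟨by simpa using hc, by simpa using m4, ?_⟩
    intro i hi hi2
    have hi3 : i ≤ 3 := by omega
    interval_cases i <;> simpa
  · simp
  · intro γ hγ0 hγ1 i hi hi2
    refine h_ge 5 γ _ _ (by linarith) (by linarith) (by norm_num) ?_
    obtain ⟨p1, p2, p3, p4⟩ := h γ (by linarith) (by linarith)
    interval_cases i
    · simp [etaFun]
    · simpa [etaFun] using p1
    · simpa [etaFun] using p2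
    · simpa [etaFun] using p3
    · simpa [etaFun] using p4

/-- Lower bound with 2 batches from one exponent per step. -/
lemma lower2 (d : ℕ) (β : ℝ) (hβ : 0 < β) (a c g2 : ℝ) (ha : gammaMin d β ≤ a)
    (p2 : a ≤ g2 ∧ g2 ≤ 1 - a)
    (h : ∀ p u1 : ℝ, u1 ≤ p → 1 - g2 * u1 ≤ p + (1 - g2) / (1 - g2 ^ 2) → c ≤ p) :
    c ≤ psiStar d β 2 := by
  refine star_ge d β _ _ fun u hu => ?_
  have k2 := lower_gen d β hβ 2 (by norm_num) u hu g2 (by linarith) (by linarith) 2 (by norm_num) (by norm_num)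
  refine h _ (u 1) (le_max_left _ _) ?_
  · simpa [etaFun, hFun] using k2

/-- Lower bound with 3 batches from one exponent per step. -/
lemma lower3 (d : ℕ) (β : ℝ) (hβ : 0 < β) (a c g2 g3 : ℝ) (ha : gammaMin d β ≤ a)
    (p2 : a ≤ g2 ∧ g2 ≤ 1 - a) (p3 : a ≤ g3 ∧ g3 ≤ 1 - a)
    (h : ∀ p u1 u2 : ℝ, u1 ≤ p → u2 - g2 * u1 ≤ p + (1 - g2) / (1 - g2 ^ 3) → 1 - g3 * u2 ≤ p + (1 - g3) / (1 - g3 ^ 3) → c ≤ p) :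
    c ≤ psiStar d β 3 := by
  refine star_ge d β _ _ fun u hu => ?_
  have k2 := lower_gen d β hβ 3 (by norm_num) u hu g2 (by linarith) (by linarith) 2 (by norm_num) (by norm_num)
  have k3 := lower_gen d β hβ 3 (by norm_num) u hu g3 (by linarith) (by linarith) 3 (by norm_num) (by norm_num)
  refine h _ (u 1) (u 2) (le_max_left _ _) ?_ ?_
  · simpa [etaFun, hFun] using k2
  · simpa [etaFun, hFun] using k3

/-- Lower bound with 4 batches from one exponent per step. -/
lemma lower4 (d : ℕ) (β : ℝ) (hβ : 0 < β) (a c g2 g3 g4 : ℝ) (ha : gammaMin d β ≤ a)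
    (p2 : a ≤ g2 ∧ g2 ≤ 1 - a) (p3 : a ≤ g3 ∧ g3 ≤ 1 - a) (p4 : a ≤ g4 ∧ g4 ≤ 1 - a)
    (h : ∀ p u1 u2 u3 : ℝ, u1 ≤ p → u2 - g2 * u1 ≤ p + (1 - g2) / (1 - g2 ^ 4) → u3 - g3 * u2 ≤ p + (1 - g3) / (1 - g3 ^ 4) → 1 - g4 * u3 ≤ p + (1 - g4) / (1 - g4 ^ 4) → c ≤ p) :
    c ≤ psiStar d β 4 := by
  refine star_ge d β _ _ fun u hu => ?_
  have k2 := lower_gen d β hβ 4 (by norm_num) u hu g2 (by linarith) (by linarith) 2 (by norm_num) (by norm_num)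
  have k3 := lower_gen d β hβ 4 (by norm_num) u hu g3 (by linarith) (by linarith) 3 (by norm_num) (by norm_num)
  have k4 := lower_gen d β hβ 4 (by norm_num) u hu g4 (by linarith) (by linarith) 4 (by norm_num) (by norm_num)
  refine h _ (u 1) (u 2) (u 3) (le_max_left _ _) ?_ ?_ ?_
  · simpa [etaFun, hFun] using k2
  · simpa [etaFun, hFun] using k3
  · simpa [etaFun, hFun] using k4

lemma up_2_0 (d : ℕ) (β : ℝ) (hβ : 0 < β) (ha : 0 ≤ gammaMin d β) :
    psiStar d β 3 ≤ 533 / 2500 := by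
  refine upper3 d β hβ (0) (533 / 2500) (13 / 20) ha (by norm_num) (by norm_num) (by norm_num) ?_
  intro x h0 h1
  norm_num at h1
  simp only [Finset.sum_range_succ, Finset.sum_range_zero]
  obtain ⟨b0, b1, b2, b3⟩ := bern3 _ _ x h0 h1
  refine ⟨?_, ?_⟩ <;> linarith

lemma low_2_0 (d : ℕ) (β : ℝ) (hβ : 0 < β) (ha : gammaMin d β ≤ 1 / 2) :
    2 / 9 ≤ psiStar d β 2 := by
  refine lower2 d β hβ (1 / 2) _ (1 / 2) ha (by norm_num) ?_
  norm_num
  intros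
  linarith

lemma up_3_0 (d : ℕ) (β : ℝ) (hβ : 0 < β) (ha : 0 ≤ gammaMin d β) :
    psiStar d β 4 ≤ 919 / 10000 := by
  refine upper4 d β hβ (0) (919 / 10000) (107 / 250) (381 / 500) ha (by norm_num) (by norm_num) (by norm_num) (by norm_num) ?_
  intro x h0 h1
  norm_num at h1
  simp only [Finset.sum_range_succ, Finset.sum_range_zero]
  rcases le_total x (1 / 2) with h1 | h0
  · obtain ⟨b0, b1, b2, b3, b4⟩ := bern4 _ _ x h0 h1
    refine ⟨?_, ?_, ?_⟩ <;> linarith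
  rcases le_total x (3 / 4) with h1 | h0
  · obtain ⟨b0, b1, b2, b3, b4⟩ := bern4 _ _ x h0 h1
    refine ⟨?_, ?_, ?_⟩ <;> linarith
  obtain ⟨b0, b1, b2, b3, b4⟩ := bern4 _ _ x h0 h1
  refine ⟨?_, ?_, ?_⟩ <;> linarith

lemma low_3_0 (d : ℕ) (β : ℝ) (hβ : 0 < β) (ha : gammaMin d β ≤ 43 / 100) :
    512836875 / 5550275794 ≤ psiStar d β 3 := by
  refine lower3 d β hβ (43 / 100) _ (57 / 100) (12 / 25) ha (by norm_num) (by norm_num) ?_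
  norm_num
  intros
  linarith

lemma up_3_1 (d : ℕ) (β : ℝ) (hβ : 0 < β) (ha : 43 / 100 ≤ gammaMin d β) :
    psiStar d β 4 ≤ 391 / 5000 := by
  refine upper4 d β hβ (43 / 100) (391 / 5000) (1139 / 2000) (17 / 20) ha (by norm_num) (by norm_num) (by norm_num) (by norm_num) ?_
  intro x h0 h1
  norm_num at h1
  simp only [Finset.sum_range_succ, Finset.sum_range_zero]
  obtain ⟨b0, b1, b2, b3, b4⟩ := bern4 _ _ x h0 h1
  refine ⟨?_, ?_, ?_⟩ <;> linarith

lemma low_3_1 (d : ℕ) (β : ℝ) (hβ : 0 < β) (ha : gammaMin d β ≤ 1 / 2) :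
    4 / 49 ≤ psiStar d β 3 := by
  refine lower3 d β hβ (1 / 2) _ (1 / 2) (1 / 2) ha (by norm_num) (by norm_num) ?_
  norm_num
  intros
  linarith

lemma up_4_0 (d : ℕ) (β : ℝ) (hβ : 0 < β) (ha : 0 ≤ gammaMin d β) :
    psiStar d β 5 ≤ 721 / 10000 := by
  refine upper5 d β hβ (0) (721 / 10000) (42 / 125) (1199 / 2000) (841 / 1000) ha (by norm_num) (by norm_num) (by norm_num) (by norm_num) (by norm_num) ?_
  intro x h0 h1
  norm_num at h1
  simp only [Finset.sum_range_succ, Finset.sum_range_zero]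
  rcases le_total x (1 / 2) with h1 | h0
  · obtain ⟨b0, b1, b2, b3, b4, b5⟩ := bern5 _ _ x h0 h1
    refine ⟨?_, ?_, ?_, ?_⟩ <;> linarith
  rcases le_total x (3 / 4) with h1 | h0
  · obtain ⟨b0, b1, b2, b3, b4, b5⟩ := bern5 _ _ x h0 h1
    refine ⟨?_, ?_, ?_, ?_⟩ <;> linarith
  obtain ⟨b0, b1, b2, b3, b4, b5⟩ := bern5 _ _ x h0 h1
  refine ⟨?_, ?_, ?_, ?_⟩ <;> linarith

lemma low_4_0 (d : ℕ) (β : ℝ) (hβ : 0 < β) (ha : gammaMin d β ≤ 1 / 5) :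
    2755178125 / 37803096791 ≤ psiStar d β 4 := by
  refine lower4 d β hβ (1 / 5) _ (4 / 5) (4 / 5) (49 / 100) ha (by norm_num) (by norm_num) (by norm_num) ?_
  norm_num
  intros
  linarith

lemma up_4_1 (d : ℕ) (β : ℝ) (hβ : 0 < β) (ha : 1 / 5 ≤ gammaMin d β) :
    psiStar d β 5 ≤ 281 / 5000 := by
  refine upper5 d β hβ (1 / 5) (281 / 5000) (391 / 1000) (659 / 1000) (1741 / 2000) ha (by norm_num) (by norm_num) (by norm_num) (by norm_num) (by norm_num) ?_
  intro x h0 h1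
  norm_num at h1
  simp only [Finset.sum_range_succ, Finset.sum_range_zero]
  rcases le_total x (1 / 2) with h1 | h0
  · obtain ⟨b0, b1, b2, b3, b4, b5⟩ := bern5 _ _ x h0 h1
    refine ⟨?_, ?_, ?_, ?_⟩ <;> linarith
  obtain ⟨b0, b1, b2, b3, b4, b5⟩ := bern5 _ _ x h0 h1
  refine ⟨?_, ?_, ?_, ?_⟩ <;> linarith

lemma low_4_1 (d : ℕ) (β : ℝ) (hβ : 0 < β) (ha : gammaMin d β ≤ 7 / 20) :
    6993288000 / 122713663241 ≤ psiStar d β 4 := by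
  refine lower4 d β hβ (7 / 20) _ (13 / 20) (13 / 20) (9 / 20) ha (by norm_num) (by norm_num) (by norm_num) ?_
  norm_num
  intros
  linarith

lemma up_4_2 (d : ℕ) (β : ℝ) (hβ : 0 < β) (ha : 7 / 20 ≤ gammaMin d β) :
    psiStar d β 5 ≤ 27 / 625 := by
  refine upper5 d β hβ (7 / 20) (27 / 625) (183 / 400) (727 / 1000) (451 / 500) ha (by norm_num) (by norm_num) (by norm_num) (by norm_num) (by norm_num) ?_
  intro x h0 h1
  norm_num at h1
  simp only [Finset.sum_range_succ, Finset.sum_range_zero]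
  obtain ⟨b0, b1, b2, b3, b4, b5⟩ := bern5 _ _ x h0 h1
  refine ⟨?_, ?_, ?_, ?_⟩ <;> linarith

lemma low_4_2 (d : ℕ) (β : ℝ) (hβ : 0 < β) (ha : gammaMin d β ≤ 9 / 20) :
    4708872000 / 106605916001 ≤ psiStar d β 4 := by
  refine lower4 d β hβ (9 / 20) _ (11 / 20) (11 / 20) (9 / 20) ha (by norm_num) (by norm_num) (by norm_num) ?_
  norm_num
  intros
  linarith

lemma up_4_3 (d : ℕ) (β : ℝ) (hβ : 0 < β) (ha : 9 / 20 ≤ gammaMin d β) :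
    psiStar d β 5 ≤ 343 / 10000 := by
  refine upper5 d β hβ (9 / 20) (343 / 10000) (1031 / 2000) (1561 / 2000) (463 / 500) ha (by norm_num) (by norm_num) (by norm_num) (by norm_num) (by norm_num) ?_
  intro x h0 h1
  norm_num at h1
  simp only [Finset.sum_range_succ, Finset.sum_range_zero]
  obtain ⟨b0, b1, b2, b3, b4, b5⟩ := bern5 _ _ x h0 h1
  refine ⟨?_, ?_, ?_, ?_⟩ <;> linarith

lemma low_4_3 (d : ℕ) (β : ℝ) (hβ : 0 < β) (ha : gammaMin d β ≤ 1 / 2) :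
    8 / 225 ≤ psiStar d β 4 := by
  refine lower4 d β hβ (1 / 2) _ (1 / 2) (1 / 2) (1 / 2) ha (by norm_num) (by norm_num) (by norm_num) ?_
  norm_num
  intros
  linarith

theorem stmt5 (d : ℕ) (hd : 1 ≤ d) (β : ℝ) (hβ : 0 < β)
    (M : ℕ) (hM2 : 2 ≤ M) (hM4 : M ≤ 4) :
    psiStar d β (M + 1) < psiStar d β M := by
  interval_cases M
  · -- M = 2
    exact (up_2_0 d β hβ (gm_pos d β hβ).le).trans_lt (lt_of_lt_of_le (by norm_num) (low_2_0 d β hβ (gm_half d β hβ)))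
  · -- M = 3
    rcases le_total (gammaMin d β) (43 / 100) with h | h0
    · exact (up_3_0 d β hβ (gm_pos d β hβ).le).trans_lt (lt_of_lt_of_le (by norm_num) (low_3_0 d β hβ h))
    exact (up_3_1 d β hβ h0).trans_lt (lt_of_lt_of_le (by norm_num) (low_3_1 d β hβ (gm_half d β hβ)))
  · -- M = 4
    rcases le_total (gammaMin d β) (1 / 5) with h | h0
    · exact (up_4_0 d β hβ (gm_pos d β hβ).le).trans_lt (lt_of_lt_of_le (by norm_num) (low_4_0 d β hβ h))
    rcases le_total (gammaMin d β) (7 / 20) with h | h0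
    · exact (up_4_1 d β hβ h0).trans_lt (lt_of_lt_of_le (by norm_num) (low_4_1 d β hβ h))
    rcases le_total (gammaMin d β) (9 / 20) with h | h0
    · exact (up_4_2 d β hβ h0).trans_lt (lt_of_lt_of_le (by norm_num) (low_4_2 d β hβ h))
    exact (up_4_3 d β hβ h0).trans_lt (lt_of_lt_of_le (by norm_num) (low_4_3 d β hβ (gm_half d β hβ)))
end

section
/- Let M ≥ 2 be an integer, let u* be a minimizer of ψ_M over U_M, and set u*_0 = 0 and u*_M = 1. Suppose u*_j = u*_{j−1} for some 1 ≤ j ≤ M. Then for every γ ∈ 𝒮, η_j(u*, γ) − h_M(γ) < ψ_M(u*); moreover, if j = 1 then also u*_1 < ψ_M(u*). -/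
theorem aux_eta (M : ℕ) (u : ℕ → ℝ) (hu0 : u 0 = 0) (huM : u M = 1) (γ : ℝ) (i : ℕ) :
    etaFun M u γ i = u i - γ * u (i - 1) := by
  unfold etaFun
  split_ifs with h1 h2
  · subst h1; simp [hu0]
  · subst h2; rw [huM]
  · rfl

theorem aux_Sset (d : ℕ) (hd : 1 ≤ d) (β : ℝ) (hβ : 0 < β) :
    (∀ γ ∈ Sset d β, 0 < γ ∧ γ < 1) ∧ gammaMin d β ∈ Sset d β := by
  have hd' : (1 : ℝ) ≤ d := by exact_mod_cast hd
  have hp : 0 < 2 * β + d := by linarith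
  have h1 : 0 < gammaMin d β := by unfold gammaMin; positivity
  have h2 : gammaMax d β < 1 := by unfold gammaMax; rw [div_lt_one hp]; linarith
  refine ⟨fun γ hγ => ⟨lt_of_lt_of_le h1 hγ.1, lt_of_le_of_lt hγ.2 h2⟩, ?_⟩
  refine ⟨le_refl _, ?_⟩
  unfold gammaMin gammaMax
  gcongr
  linarith

theorem aux_bounds (M : ℕ) (hM2 : 2 ≤ M) (u : ℕ → ℝ) (hu : u ∈ UM M) (hu0 : u 0 = 0)
    (huM : u M = 1) : ∀ i, i ≤ M → 0 ≤ u i ∧ u i ≤ 1 := by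
  obtain ⟨h0, h1, hm⟩ := hu
  have hstep : ∀ i, i < M → u i ≤ u (i + 1) := by
    intro i hi
    rcases Nat.eq_zero_or_pos i with rfl | hi0
    · simpa [hu0] using h0
    · rcases Nat.lt_or_ge (i + 1) M with h | h
      · exact hm i hi0 (by omega)
      · have : i + 1 = M := by omega
        rw [this, huM]
        have : i = M - 1 := by omega
        rw [this]; exact h1
  have hA : ∀ i, i ≤ M → 0 ≤ u i := by
    intro i
    induction i with
    | zero => intro _; rw [hu0]
    | succ k ih => intro hk; exact (ih (by omega)).trans (hstep k (by omega))
  have hB : ∀ k, k ≤ M → u (M - k) ≤ 1 := by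
    intro k
    induction k with
    | zero => intro _; simp [huM]
    | succ k ih =>
      intro hk
      have h := hstep (M - (k + 1)) (by omega)
      have e : M - (k + 1) + 1 = M - k := by omega
      rw [e] at h
      exact h.trans (ih (by omega))
  intro i hi
  refine ⟨hA i hi, ?_⟩
  have := hB (M - i) (by omega)
  rwa [show M - (M - i) = i by omega] at this

theorem aux_pos (M : ℕ) (hM2 : 2 ≤ M) (u : ℕ → ℝ) (hu1 : u 1 = 0)
    (huM : u M = 1) (γ : ℝ) (h0 : 0 < γ) (h1 : γ < 1) :
    ∃ i, 1 ≤ i ∧ i ≤ M ∧ hFun M γ < u i - γ * u (i - 1) := by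
  by_contra! hcon
  have hpow : γ ^ M < 1 := pow_lt_one₀ h0.le h1 (by omega)
  have hh : 0 < hFun M γ := by
    unfold hFun; exact div_pos (by linarith) (by linarith)
  have key : ∀ i, i + 1 ≤ M → (1 - γ) * u (i + 1) < hFun M γ * (1 - γ ^ (i + 1)) := by
    intro i
    induction i with
    | zero =>
      intro _
      simp only [zero_add, hu1, mul_zero, pow_one]
      exact mul_pos hh (by linarith)
    | succ k ih =>
      intro hk
      have a := ih (by omega)
      have b := hcon (k + 1 + 1) (by omega) hk
      simp only [Nat.add_sub_cancel] at b
      have c := mul_le_mul_of_nonneg_left b (show 0 ≤ 1 - γ by linarith)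
      have a2 := mul_lt_mul_of_pos_left a h0
      rw [pow_succ γ (k + 1)]
      nlinarith
  have k := key (M - 1) (by omega)
  rw [show M - 1 + 1 = M by omega, huM] at k
  unfold hFun at k
  rw [div_mul_cancel₀ _ (by linarith)] at k
  linarith

theorem stmt6 (d : ℕ) (hd : 1 ≤ d) (β : ℝ) (hβ : 0 < β) (M : ℕ) (hM2 : 2 ≤ M)
    (u : ℕ → ℝ) (hu : u ∈ UM M) (hmin : psiFun d β M u = psiStar d β M)
    (hu0 : u 0 = 0) (huM : u M = 1)
    (j : ℕ) (hj1 : 1 ≤ j) (hjM : j ≤ M) (heq : u j = u (j - 1)) :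
    (∀ γ ∈ Sset d β, etaFun M u γ j - hFun M γ < psiFun d β M u) ∧
    (j = 1 → u 1 < psiFun d β M u) := by
  obtain ⟨hS, hmem⟩ := aux_Sset d hd β hβ
  have hb := aux_bounds M hM2 u hu hu0 huM
  have hψ : u 1 ≤ psiFun d β M u := le_max_left _ _
  have hη := aux_eta M u hu0 huM
  have hpow : ∀ γ ∈ Sset d β, 0 < γ ^ M ∧ γ ^ M < 1 := fun γ hγ =>
    ⟨pow_pos (hS γ hγ).1 _, pow_lt_one₀ (hS γ hγ).1.le (hS γ hγ).2 (by omega)⟩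
  have hle : ∀ γ ∈ Sset d β, ∀ i, 1 ≤ i → i ≤ M → etaFun M u γ i ≤ 1 := by
    intro γ hγ i h1 h2
    rw [hη]
    have := mul_nonneg (hS γ hγ).1.le (hb (i - 1) (by omega)).1
    linarith [(hb i h2).2]
  constructor
  · intro γ hγ
    obtain ⟨g0, g1⟩ := hS γ hγ
    obtain ⟨p0, p1⟩ := hpow γ hγ
    have : etaFun M u γ j < hFun M γ := by
      rw [hη, ← heq]
      unfold hFun
      rw [lt_div_iff₀ (by linarith)]
      have := (hb j hjM).2
      have h3 : u j * (1 - γ ^ M) < 1 := by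
        nlinarith [mul_le_mul_of_nonneg_right this (show 0 ≤ 1 - γ ^ M by linarith)]
      nlinarith [mul_lt_mul_of_pos_left h3 (show 0 < 1 - γ by linarith)]
    linarith [hu.1]
  · rintro rfl
    have hu1 : u 1 = 0 := by rw [heq]; simpa using hu0
    rw [hu1]
    obtain ⟨g0, g1⟩ := hS _ hmem
    obtain ⟨i, hi1, hiM, hi⟩ := aux_pos M hM2 u hu1 huM _ g0 g1
    rw [← hη] at hi
    have hP : 0 < PsiFun M u (gammaMin d β) := by
      unfold PsiFun
      have hbdd : BddAbove (Set.range fun i : Set.Icc 1 M => etaFun M u (gammaMin d β) i.1) :=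
        ⟨1, by rintro _ ⟨k, rfl⟩; exact hle _ hmem _ k.2.1 k.2.2⟩
      have := le_ciSup hbdd ⟨i, hi1, hiM⟩
      simp only at this
      linarith
    have hbdd : BddAbove (Set.range fun γ : Sset d β => PsiFun M u γ.1) := by
      refine ⟨1, ?_⟩
      rintro _ ⟨γ, rfl⟩
      have hh : 0 ≤ hFun M γ.1 := by
        unfold hFun
        exact div_nonneg (by linarith [(hS _ γ.2).2]) (by linarith [(hpow _ γ.2).2])
      haveI : Nonempty (Set.Icc 1 M) := ⟨⟨1, le_refl _, by omega⟩⟩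
      have : (⨆ i : Set.Icc 1 M, etaFun M u γ.1 i.1) ≤ 1 :=
        ciSup_le fun k => hle _ γ.2 _ k.2.1 k.2.2
      simp only [PsiFun]
      linarith
    have := le_ciSup hbdd ⟨gammaMin d β, hmem⟩
    exact lt_of_lt_of_le hP (this.trans (le_max_right _ _))
end

section
/- Let M ≥ 3 be an integer and let (u_0, u_1, …, u_M) solve the optimality system. Then for every c ∈ 𝒮, u_1 ≥ [ c^{−1}·γ_max^{−(M−3)}·(1 − h_M(c)) − h_M(γ_max)·S_{M−2}(γ_max) ] / [ S_{M−2}(γ_max) + γ_max + c^{−1}·γ_max^{−(M−3)} ]. -/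
/-- S_n(a) = Σ_{k=0}^{n−1} a^{−k}. -/
noncomputable def Sgeo (n : ℕ) (a : ℝ) : ℝ := ∑ k ∈ Finset.range n, a⁻¹ ^ k

theorem phi_le_aux (d : ℕ) (hd : 1 ≤ d) (β : ℝ) (hβ : 0 < β) (M : ℕ) (x c : ℝ)
    (hc : c ∈ Sset d β) : phiFun d β M x ≤ c * x + hFun M c := by
  have hd' : (1 : ℝ) ≤ d := by exact_mod_cast hd
  unfold phiFun
  apply csInf_le
  · refine ⟨-|x|, ?_⟩
    rintro _ ⟨γ, ⟨h1, h2⟩, rfl⟩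
    have h0 : 0 < gammaMin d β := by unfold gammaMin; positivity
    have h3 : gammaMax d β < 1 := by
      unfold gammaMax
      rw [div_lt_one (by positivity)]
      linarith
    have hγ0 : 0 < γ := by linarith
    have hγ1 : γ < 1 := by linarith
    have hh : 0 ≤ hFun M γ := by
      unfold hFun
      apply div_nonneg
      · linarith
      · have := pow_le_one₀ (n := M) hγ0.le hγ1.le
        linarith
    have := neg_abs_le x
    have := abs_nonneg x
    show -|x| ≤ γ * x + hFun M γ
    nlinarith
  · exact ⟨c, hc, rfl⟩

theorem stmt7 (d : ℕ) (hd : 1 ≤ d) (β : ℝ) (hβ : 0 < β) (M : ℕ) (hM3 : 3 ≤ M)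
    (u : ℕ → ℝ) (hsol : SolvesOptSystem d β M u)
    (c : ℝ) (hc : c ∈ Sset d β) :
    (c⁻¹ * (gammaMax d β)⁻¹ ^ (M - 3) * (1 - hFun M c)
        - hFun M (gammaMax d β) * Sgeo (M - 2) (gammaMax d β)) /
      (Sgeo (M - 2) (gammaMax d β) + gammaMax d β + c⁻¹ * (gammaMax d β)⁻¹ ^ (M - 3))
    ≤ u 1 := by
  obtain ⟨-, hM, -, -, -, hrec⟩ := hsol
  have hd' : (1 : ℝ) ≤ d := by exact_mod_cast hd
  have h0 : 0 < gammaMin d β := by unfold gammaMin; positivity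
  have hc0 : 0 < c := lt_of_lt_of_le h0 hc.1
  have hg0 : 0 < gammaMax d β := lt_of_lt_of_le hc0 hc.2
  have hgS : gammaMax d β ∈ Sset d β := ⟨hc.1.trans hc.2, le_rfl⟩
  have key : ∀ γ ∈ Sset d β, ∀ i, 2 ≤ i → i ≤ M →
      u i ≤ u 1 + γ * u (i - 1) + hFun M γ := by
    intro γ hγ i hi hiM
    have := phi_le_aux d hd β hβ M (u (i - 1)) γ hγ
    rw [hrec i hi hiM]
    linarith
  have kc := key c hc M (by omega) le_rfl
  have kg := key _ hgS
  rw [hM] at kc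
  generalize gammaMax d β = g at *
  generalize hFun M g = h at *
  have ind : ∀ n, n + 2 ≤ M → g⁻¹ ^ n * u (n + 2) ≤ g * u 1 + (u 1 + h) * Sgeo (n + 1) g := by
    intro n
    induction n with
    | zero =>
      intro hn
      have := kg 2 le_rfl hn
      simp [Sgeo] at this ⊢
      linarith
    | succ n ih =>
      intro hn
      have h1 := kg (n + 1 + 2) (by omega) hn
      have h2 := ih (by omega)
      have e : n + 1 + 2 - 1 = n + 2 := by omega
      rw [e] at h1
      have e2 : Sgeo (n + 1 + 1) g = Sgeo (n + 1) g + g⁻¹ ^ (n + 1) := by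
        simp [Sgeo, Finset.sum_range_succ]
      have h3 := mul_le_mul_of_nonneg_left h1 (show 0 ≤ g⁻¹ ^ (n + 1) by positivity)
      have e3 : g⁻¹ ^ (n + 1) * (g * u (n + 2)) = g⁻¹ ^ n * u (n + 2) := by
        rw [pow_succ]; field_simp
      rw [e2]
      nlinarith
  obtain ⟨m, rfl⟩ : ∃ m, M = m + 3 := ⟨M - 3, by omega⟩
  have hi := ind m (by omega)
  have e1 : m + 3 - 3 = m := by omega
  have e2 : m + 3 - 2 = m + 1 := by omega
  have e3 : m + 3 - 1 = m + 2 := by omega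
  rw [e3] at kc
  rw [e1, e2]
  have hS : 0 ≤ Sgeo (m + 1) g := by
    unfold Sgeo
    positivity
  have hP : 0 < g⁻¹ ^ m := by positivity
  have hci : 0 < c⁻¹ := by positivity
  rw [div_le_iff₀ (by positivity)]
  have h3 := mul_le_mul_of_nonneg_left kc (mul_pos hci hP).le
  have e4 : c⁻¹ * g⁻¹ ^ m * (c * u (m + 2)) = g⁻¹ ^ m * u (m + 2) := by
    field_simp
  nlinarith
end

section
/- Let M ≥ 2 be an integer and let (u_0, u_1, …, u_M) solve the optimality system. Then u_1 ≤ (M+1)·γ_max^{M−1}/(1−γ_max)². -/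
theorem phi_lower (d : ℕ) (β : ℝ) (hβ : 0 < β) (M : ℕ) (hM2 : 2 ≤ M) (x : ℝ) (hx : x ≤ 1) :
    1 - gammaMax d β * (1 - x) ≤ phiFun d β M x := by
  have hden : (0 : ℝ) < 2 * β + d := by positivity
  have h0 : 0 < gammaMin d β := by unfold gammaMin; positivity
  have h1 : gammaMax d β < 1 := by
    unfold gammaMax
    rw [div_lt_one hden]; linarith
  have hle : gammaMin d β ≤ gammaMax d β := by
    unfold gammaMin gammaMax
    gcongr
    linarith [(Nat.cast_nonneg d : (0 : ℝ) ≤ d)]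
  unfold phiFun
  apply le_csInf
  · exact ⟨_, ⟨gammaMin d β, ⟨le_refl _, hle⟩, rfl⟩⟩
  · rintro _ ⟨γ, ⟨ha, hb⟩, rfl⟩
    have hγ0 : 0 < γ := by linarith
    have hγ1 : γ < 1 := by linarith
    have hp : γ ^ M < 1 := pow_lt_one₀ hγ0.le hγ1 (by omega)
    have hp0 : 0 < γ ^ M := by positivity
    have hh : 1 - γ ≤ hFun M γ := by
      unfold hFun
      rw [le_div_iff₀ (by linarith)]
      nlinarith
    show _ ≤ γ * x + hFun M γ
    nlinarith

theorem stmt8 (d : ℕ) (hd : 1 ≤ d) (β : ℝ) (hβ : 0 < β) (M : ℕ) (hM2 : 2 ≤ M)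
    (u : ℕ → ℝ) (hsol : SolvesOptSystem d β M u) :
    u 1 ≤ (M + 1) * gammaMax d β ^ (M - 1) / (1 - gammaMax d β) ^ 2 := by
  obtain ⟨-, huM, hu1, hlast, hmono, hrec⟩ := hsol
  have hphi := phi_lower d β hβ M hM2
  have hden : (0 : ℝ) < 2 * β + d := by positivity
  have h0 : 0 < gammaMax d β := by unfold gammaMax; positivity
  have h1 : gammaMax d β < 1 := by
    unfold gammaMax
    rw [div_lt_one hden]; linarith
  generalize gammaMax d β = g at *
  obtain ⟨n, rfl⟩ : ∃ n, M = n + 2 := ⟨M - 2, by omega⟩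
  simp only [show n + 2 - 1 = n + 1 by omega] at *
  have hlt : ∀ k, k ≤ n → u (n + 1 - k) < 1 := by
    intro k
    induction k with
    | zero => intro _; simpa using hlast
    | succ k ih =>
      intro hk
      have := hmono (n + 1 - (k + 1)) (by omega) (by omega)
      rw [show n + 1 - (k + 1) + 1 = n + 1 - k by omega] at this
      linarith [ih (by omega)]
  have hlt' : ∀ i, i ≤ n → u (i + 1) < 1 := by
    intro i hi
    have := hlt (n - i) (by omega)
    rwa [show n + 1 - (n - i) = i + 1 by omega] at this
  have hstep : ∀ i, i ≤ n → 1 - u (i + 2) ≤ g * (1 - u (i + 1)) - u 1 := by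
    intro i hi
    have h2 := hrec (i + 2) (by omega) (by omega)
    rw [show i + 2 - 1 = i + 1 by omega] at h2
    have := hphi (u (i + 1)) (hlt' i hi).le
    linarith
  have hpow : ∀ i, i ≤ n → 1 - u (i + 1) ≤ g ^ i := by
    intro i
    induction i with
    | zero => intro _; simp; linarith
    | succ i ih =>
      intro hi
      have h2 := hstep i (by omega)
      have h3 := mul_le_mul_of_nonneg_left (ih (by omega)) h0.le
      rw [pow_succ']
      show 1 - u (i + 2) ≤ _
      linarith
  have hfin : u 1 ≤ g ^ (n + 1) := by
    have h2 := hstep n le_rfl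
    have h3 := mul_le_mul_of_nonneg_left (hpow n le_rfl) h0.le
    rw [pow_succ']
    linarith
  have hg : 0 < g ^ (n + 1) := by positivity
  refine hfin.trans ?_
  rw [le_div_iff₀ (by have : 0 < 1 - g := by linarith
                      positivity)]
  have hsq : (1 - g) ^ 2 ≤ 1 := by nlinarith
  have hM : (1 : ℝ) ≤ ((n + 2 : ℕ) : ℝ) + 1 := by
    linarith [(Nat.cast_nonneg (n + 2) : (0 : ℝ) ≤ ((n + 2 : ℕ) : ℝ))]
  nlinarith
end

section
/- Let M ≥ 3 be an integer, let (u_0, u_1, …, u_M) solve the optimality system, and set Δ_i = u_{i+1} − u_i. Then γ_M ≤ Δ_{M−1}/Δ_{M−2} ≤ γ_{M−1}. -/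
theorem stmt10 (d : ℕ) (hd : 1 ≤ d) (β : ℝ) (hβ : 0 < β) (M : ℕ) (hM3 : 3 ≤ M)
    (u : ℕ → ℝ) (hsol : SolvesOptSystem d β M u)
    (gM gM1 : ℝ) (hgM : gM ∈ Sset d β)
    (hgMmin : ∀ γ ∈ Sset d β,
      gM * u (M - 1) + hFun M gM ≤ γ * u (M - 1) + hFun M γ)
    (hgM1 : gM1 ∈ Sset d β)
    (hgM1min : ∀ γ ∈ Sset d β,
      gM1 * u (M - 2) + hFun M gM1 ≤ γ * u (M - 2) + hFun M γ) :
    gM ≤ (u M - u (M - 1)) / (u (M - 1) - u (M - 2)) ∧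
    (u M - u (M - 1)) / (u (M - 1) - u (M - 2)) ≤ gM1 := by
  obtain ⟨-, -, -, -, hmono, hrec⟩ := hsol
  have key : ∀ g ∈ Sset d β, ∀ x : ℝ,
      (∀ γ ∈ Sset d β, g * x + hFun M g ≤ γ * x + hFun M γ) →
      phiFun d β M x = g * x + hFun M g := by
    intro g hg x h
    refine IsLeast.csInf_eq ⟨⟨g, hg, rfl⟩, ?_⟩
    rintro _ ⟨γ, hγ, rfl⟩
    exact h γ hγ
  have e1 := hrec M (by omega) le_rfl
  have e2 := hrec (M - 1) (by omega) (by omega)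
  have hm := hmono (M - 2) (by omega) (by omega)
  rw [show M - 1 - 1 = M - 2 by omega] at e2
  rw [show M - 2 + 1 = M - 1 by omega] at hm
  rw [key gM hgM _ hgMmin] at e1
  rw [key gM1 hgM1 _ hgM1min] at e2
  have hpos : 0 < u (M - 1) - u (M - 2) := sub_pos.mpr hm
  have i1 := hgMmin gM1 hgM1
  have i2 := hgM1min gM hgM
  rw [le_div_iff₀ hpos, div_le_iff₀ hpos]
  constructor <;> rw [mul_sub] <;> linarith
end

section
/- Let M ≥ 3 be an integer, let (u_0, u_1, …, u_M) solve the optimality system, and let b ∈ (γ_min, 1/2) satisfy b < γ_M < 1/2. If γ_{M−1} < (1 + h'_M(b))·(1 + γ_M·(1/2 − b))/(1/2 − b), then u_{M−2} < u_{M−1}·(γ_M + 1/2). -/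
theorem cheb_aux (M : ℕ) (b g : ℝ) (hb : 0 < b) (hbg : b < g) (hg : g < 1) :
    (M : ℝ) * b ^ (M - 1) * ∑ i ∈ Finset.range M, g ^ i ≤
      (∑ i ∈ Finset.range M, g ^ i * b ^ (M - 1 - i)) * ∑ i ∈ Finset.range M, b ^ i := by
  have hr : 1 ≤ g / b := by rw [le_div_iff₀ hb]; linarith
  have hanti : AntivaryOn (fun i : ℕ => (g / b) ^ i) (fun i : ℕ => b ^ i)
      (Finset.range M : Set ℕ) := by
    apply Antivary.antivaryOn
    apply Monotone.antivary
    · intro i j hij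
      exact pow_le_pow_right₀ hr hij
    · intro i j hij
      exact pow_le_pow_of_le_one hb.le (by linarith) hij
  have h := hanti.card_mul_sum_le_sum_mul_sum
  have e1 : ∑ i ∈ Finset.range M, (g / b) ^ i * b ^ i = ∑ i ∈ Finset.range M, g ^ i := by
    apply Finset.sum_congr rfl
    intro i _
    rw [← mul_pow, div_mul_cancel₀ _ hb.ne']
  have e2 : ∑ i ∈ Finset.range M, g ^ i * b ^ (M - 1 - i)
      = b ^ (M - 1) * ∑ i ∈ Finset.range M, (g / b) ^ i := by
    rw [Finset.mul_sum]
    apply Finset.sum_congr rfl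
    intro i hi
    have hi' := Finset.mem_range.1 hi
    have : b ^ (M - 1) = b ^ (M - 1 - i) * b ^ i := by
      rw [← pow_add]; congr 1; omega
    rw [this, div_pow]
    field_simp
  rw [e1, Finset.card_range] at h
  rw [e2]
  have hp : 0 ≤ b ^ (M - 1) := by positivity
  nlinarith [mul_le_mul_of_nonneg_left h hp]

theorem tangent_aux (M : ℕ) (hM : 1 ≤ M) (b g : ℝ) (hb : 0 < b) (hbg : b < g) (hg : g < 1) :
    hFun M b + deriv (hFun M) b * (g - b) ≤ hFun M g := by
  have hb1 : b < 1 := by linarith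
  have hB : 0 < 1 - b ^ M := by
    have := pow_lt_one₀ hb.le hb1 (by omega : M ≠ 0)
    linarith
  have hG : 0 < 1 - g ^ M := by
    have := pow_lt_one₀ (hb.le.trans hbg.le) hg (by omega : M ≠ 0)
    linarith
  have hd : HasDerivAt (hFun M)
      (((-1) * (1 - b ^ M) - (1 - b) * (-((M : ℝ) * b ^ (M - 1)))) / (1 - b ^ M) ^ 2) b := by
    have h1 : HasDerivAt (fun x : ℝ => 1 - x) (-1) b := by
      simpa using (hasDerivAt_id b).const_sub 1
    have h2 : HasDerivAt (fun x : ℝ => 1 - x ^ M) (-((M : ℝ) * b ^ (M - 1))) b :=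
      (hasDerivAt_pow M b).const_sub 1
    exact h1.div h2 hB.ne'
  rw [hd.deriv]
  have hc := cheb_aux M b g hb hbg hg
  have s1 : (∑ i ∈ Finset.range M, b ^ i) * (1 - b) = 1 - b ^ M := geom_sum_mul_neg b M
  have s2 : (∑ i ∈ Finset.range M, g ^ i) * (1 - g) = 1 - g ^ M := geom_sum_mul_neg g M
  have s3 : (∑ i ∈ Finset.range M, g ^ i * b ^ (M - 1 - i)) * (g - b) = g ^ M - b ^ M :=
    Commute.geom_sum₂_mul (Commute.all g b) M
  have hpos : 0 ≤ (1 - b) * (1 - g) * (g - b) := by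
    have : 0 < 1 - b := by linarith
    have : 0 < 1 - g := by linarith
    have : 0 < g - b := by linarith
    positivity
  have key : (g - b) * (1 - b) * ((M : ℝ) * b ^ (M - 1)) * (1 - g ^ M) ≤
      (1 - b ^ M) * (1 - g) * (g ^ M - b ^ M) := by
    have := mul_le_mul_of_nonneg_right hc hpos
    rw [← s1, ← s2, ← s3]
    linarith
  unfold hFun
  rw [← sub_nonneg]
  have : (1 - g) / (1 - g ^ M) - ((1 - b) / (1 - b ^ M) +
      ((-1) * (1 - b ^ M) - (1 - b) * (-((M : ℝ) * b ^ (M - 1)))) / (1 - b ^ M) ^ 2 * (g - b))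
      = ((1 - b ^ M) * (1 - g) * (g ^ M - b ^ M)
        - (g - b) * (1 - b) * ((M : ℝ) * b ^ (M - 1)) * (1 - g ^ M))
        / ((1 - g ^ M) * (1 - b ^ M) ^ 2) := by
    have := hB.ne'
    have := hG.ne'
    field_simp
    ring
  rw [this]
  apply div_nonneg
  · linarith
  · positivity

theorem phi_aux (d : ℕ) (β : ℝ) (M : ℕ) (x g : ℝ) (hg : g ∈ Sset d β)
    (hmin : ∀ γ ∈ Sset d β, g * x + hFun M g ≤ γ * x + hFun M γ) :
    phiFun d β M x = g * x + hFun M g := by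
  apply IsLeast.csInf_eq
  refine ⟨⟨g, hg, rfl⟩, ?_⟩
  rintro _ ⟨γ, hγ, rfl⟩
  exact hmin γ hγ

theorem stmt13 (d : ℕ) (hd : 1 ≤ d) (β : ℝ) (hβ : 0 < β) (M : ℕ) (hM3 : 3 ≤ M)
    (u : ℕ → ℝ) (hsol : SolvesOptSystem d β M u)
    (b : ℝ) (hb1 : gammaMin d β < b) (hb2 : b < 1 / 2)
    (gM gM1 : ℝ) (hgM : gM ∈ Sset d β)
    (hgMmin : ∀ γ ∈ Sset d β,
      gM * u (M - 1) + hFun M gM ≤ γ * u (M - 1) + hFun M γ)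
    (hgM1 : gM1 ∈ Sset d β)
    (hgM1min : ∀ γ ∈ Sset d β,
      gM1 * u (M - 2) + hFun M gM1 ≤ γ * u (M - 2) + hFun M γ)
    (hbg : b < gM) (hg12 : gM < 1 / 2)
    (hcond : gM1 < (1 + deriv (hFun M) b) * (1 + gM * (1 / 2 - b)) / (1 / 2 - b)) :
    u (M - 2) < u (M - 1) * (gM + 1 / 2) := by
  obtain ⟨-, huM, hu1, hlt1, hmono, hrec⟩ := hsol
  have hd' : (1 : ℝ) ≤ d := by exact_mod_cast hd
  have hmin0 : 0 < gammaMin d β := by unfold gammaMin; positivity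
  have hb0 : 0 < b := hmin0.trans hb1
  have hbS : b ∈ Sset d β := ⟨hb1.le, hbg.le.trans hgM.2⟩
  have r1 := hrec M (by omega) le_rfl
  have r2 := hrec (M - 1) (by omega) (by omega)
  have e : M - 1 - 1 = M - 2 := by omega
  rw [e] at r2
  rw [phi_aux d β M _ gM hgM hgMmin, huM] at r1
  rw [phi_aux d β M _ gM1 hgM1 hgM1min] at r2
  have hyx : u (M - 2) < u (M - 1) := by
    have := hmono (M - 2) (by omega) (by omega)
    rwa [show M - 2 + 1 = M - 1 by omega] at this
  have ht := tangent_aux M (by omega) b gM hb0 hbg (by linarith)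
  have m1 := hgMmin b hbS
  have m2 := hgMmin gM1 hgM1
  have m3 := hgM1min gM hgM
  have hx0 : 0 < u (M - 1) := by
    have hm : ∀ i, 1 ≤ i → i ≤ M - 1 → 0 < u i := by
      intro i hi
      induction i, hi using Nat.le_induction with
      | base => intro _; exact hu1
      | succ n hn ih => intro h; exact (ih (by omega)).trans (hmono n hn h)
    exact hm _ (by omega) le_rfl
  generalize u (M - 1) = x at *
  generalize u (M - 2) = y at *
  generalize deriv (hFun M) b = D at *
  have hkg : gM ≤ gM1 := by
    by_contra hlt
    push Not at hlt
    nlinarith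
  have hDx : 1 + D ≤ 1 - x := by
    have : D * (gM - b) ≤ (-x) * (gM - b) := by linarith
    have := le_of_mul_le_mul_right this (by linarith)
    linarith
  have hc : 0 < 1 / 2 - b := by linarith
  rw [lt_div_iff₀ hc] at hcond
  have hg0 : 0 < gM := hb0.trans hbg
  have hk0 : 0 < gM1 := by linarith
  generalize hcdef : 1 / 2 - b = c at *
  have hgc : 0 < 1 + gM * c := by positivity
  have h1 : gM1 * c < (1 - x) * (1 + gM * c) :=
    hcond.trans_le (mul_le_mul_of_nonneg_right hDx hgc.le)
  have hx1 : x * (1 + gM * c) < 1 := by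
    nlinarith [mul_le_mul_of_nonneg_right hkg hc.le]
  have h2 : gM1 * c * x < 1 - x := by
    have a1 := mul_lt_mul_of_pos_right h1 hx0
    have a2 := mul_lt_mul_of_pos_left hx1 (by linarith : 0 < 1 - x)
    nlinarith
  have h3 : 1 - x ≤ gM1 * (x - y) := by linarith
  have h4 : gM1 * (x * (1 / 2 - gM)) ≤ gM1 * c * x := by
    have : x * (1 / 2 - gM) ≤ x * c := mul_le_mul_of_nonneg_left (by linarith) hx0.le
    nlinarith [mul_le_mul_of_nonneg_left this hk0.le]
  have h5 : gM1 * (x * (1 / 2 - gM)) < gM1 * (x - y) := by linarith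
  have := lt_of_mul_lt_mul_left h5 hk0.le
  linarith
end

section
/- Fix an integer N ≥ 0 and a real δ ∈ (0,1/2). Then Σ_{x=0}^{N} binom(N,x)·2^{−N}·m(x) = 1 and Σ_{x=0}^{N} binom(N,x)·2^{−N}·m(x)² = ((1+4δ²)^N + (1−4δ²)^N)/2. In other words, if R ∼ Binomial(N, 1/2), then E[m(R)] = 1 and E[m(R)²] = ((1+4δ²)^N + (1−4δ²)^N)/2. -/
/-- Sign-averaged likelihood ratio against a fair coin, of a coin with heads probability
1/2 ± δ, after N tosses with x heads. -/
noncomputable def mcoin (N : ℕ) (δ : ℝ) (x : ℕ) : ℝ :=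
  ((1 + 2 * δ) ^ x * (1 - 2 * δ) ^ (N - x) + (1 - 2 * δ) ^ x * (1 + 2 * δ) ^ (N - x)) / 2

theorem binom_avg (N : ℕ) (a b : ℝ) :
    ∑ x ∈ Finset.range (N + 1), (N.choose x : ℝ) / 2 ^ N * (a ^ x * b ^ (N - x))
      = ((a + b) / 2) ^ N := by
  rw [div_pow, add_pow, Finset.sum_div]
  refine Finset.sum_congr rfl fun x _ => ?_
  ring

theorem stmt14 (N : ℕ) (δ : ℝ) (hδ0 : 0 < δ) (hδ : δ < 1 / 2) :
    (∑ x ∈ Finset.range (N + 1), (N.choose x : ℝ) / 2 ^ N * mcoin N δ x = 1) ∧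
    (∑ x ∈ Finset.range (N + 1), (N.choose x : ℝ) / 2 ^ N * (mcoin N δ x) ^ 2
      = ((1 + 4 * δ ^ 2) ^ N + (1 - 4 * δ ^ 2) ^ N) / 2) := by
  constructor
  · have h1 := binom_avg N (1 + 2 * δ) (1 - 2 * δ)
    have h2 := binom_avg N (1 - 2 * δ) (1 + 2 * δ)
    rw [show (1 + 2 * δ + (1 - 2 * δ)) / 2 = 1 by ring, one_pow] at h1
    rw [show (1 - 2 * δ + (1 + 2 * δ)) / 2 = 1 by ring, one_pow] at h2
    have h : ((1 : ℝ) + 1) / 2 = 1 := by norm_num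
    refine Eq.trans ?_ ((congrArg₂ (fun u v : ℝ => (u + v) / 2) h1 h2).trans h)
    simp only [← Finset.sum_add_distrib, Finset.sum_div]
    refine Finset.sum_congr rfl fun x _ => ?_
    unfold mcoin
    ring
  · have h1 := binom_avg N ((1 + 2 * δ) ^ 2) ((1 - 2 * δ) ^ 2)
    have h2 := binom_avg N ((1 - 2 * δ) ^ 2) ((1 + 2 * δ) ^ 2)
    have h3 := binom_avg N ((1 + 2 * δ) * (1 - 2 * δ)) ((1 - 2 * δ) * (1 + 2 * δ))
    rw [show ((1 + 2 * δ) ^ 2 + (1 - 2 * δ) ^ 2) / 2 = 1 + 4 * δ ^ 2 by ring] at h1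
    rw [show ((1 - 2 * δ) ^ 2 + (1 + 2 * δ) ^ 2) / 2 = 1 + 4 * δ ^ 2 by ring] at h2
    rw [show ((1 + 2 * δ) * (1 - 2 * δ) + (1 - 2 * δ) * (1 + 2 * δ)) / 2
      = 1 - 4 * δ ^ 2 by ring] at h3
    have h : ((1 + 4 * δ ^ 2) ^ N + (1 + 4 * δ ^ 2) ^ N + 2 * (1 - 4 * δ ^ 2) ^ N) / 4
        = ((1 + 4 * δ ^ 2) ^ N + (1 - 4 * δ ^ 2) ^ N) / 2 := by ring
    refine Eq.trans ?_ (((congrArg₂ (fun u v : ℝ => (u + v + 2 * (1 - 4 * δ ^ 2) ^ N) / 4)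
      h1 h2)).trans h)
    simp only [← h3, Finset.mul_sum]
    simp only [← Finset.sum_add_distrib, Finset.sum_div]
    refine Finset.sum_congr rfl fun x _ => ?_
    unfold mcoin
    generalize 1 + 2 * δ = a
    generalize 1 - 2 * δ = b
    generalize N - x = y
    simp only [mul_pow, ← pow_mul, mul_comm 2]
    ring
end

section
/- Fix integers 1 ≤ s ≤ z and a real t ≥ 1. Then (1/binom(z,s)²)·Σ_{S, S'} t^{|S ∩ S'|} ≤ exp( (s²/z)·(t − 1) ), where the sum runs over all ordered pairs (S, S') of s-element subsets of {1, …, z}. Equivalently, if S and S' are independent uniformly random s-element subsets of {1, …, z} and L = |S ∩ S'|, then E[t^L] ≤ exp( (s²/z)·(t − 1) ). -/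
lemma choose_aux (z s : ℕ) (hsz : s ≤ z) (a : ℕ) (ha : a ≤ s) :
    (z - a).choose (s - a) * z ^ a ≤ z.choose s * s ^ a := by
  induction a with
  | zero => simp
  | succ a ih =>
    have ih := ih (by omega)
    obtain ⟨k, rfl⟩ : ∃ k, s = k + a + 1 := ⟨s - a - 1, by omega⟩
    obtain ⟨m, rfl⟩ : ∃ m, z = k + m + a + 1 := ⟨z - k - a - 1, by omega⟩
    have e1 : k + m + a + 1 - (a + 1) = k + m := by omega
    have e2 : k + a + 1 - (a + 1) = k := by omega
    have e3 : k + m + a + 1 - a = k + m + 1 := by omega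
    have e4 : k + a + 1 - a = k + 1 := by omega
    rw [e3, e4] at ih
    rw [e1, e2]
    have h := Nat.add_one_mul_choose_eq (k + m) k
    have h2 : (k + 1) * (k + m + a + 1) ≤ (k + a + 1) * (k + m + 1) := by nlinarith [Nat.zero_le (a*m)]
    refine Nat.le_of_mul_le_mul_left (c := k + m + 1) ?_ (by omega)
    calc (k + m + 1) * ((k + m).choose k * (k + m + a + 1) ^ (a + 1))
        = ((k + m + 1) * (k + m).choose k) * (k + m + a + 1) ^ (a + 1) := by ring
      _ = ((k + m + 1).choose (k + 1) * (k + m + a + 1) ^ a) * ((k + 1) * (k + m + a + 1)) := by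
          rw [h]; ring
      _ ≤ _ := Nat.mul_le_mul ih h2
      _ = _ := by ring

lemma count_aux (z s : ℕ) (A : Finset ℕ) (hA : A ⊆ Finset.range z) :
    (((Finset.range z).powersetCard s).filter (fun S' => A ⊆ S')).card
      ≤ (z - A.card).choose (s - A.card) := by
  have : (z - A.card).choose (s - A.card)
      = ((Finset.range z \ A).powersetCard (s - A.card)).card := by
    rw [Finset.card_powersetCard, Finset.card_sdiff_of_subset hA, Finset.card_range]
  rw [this]
  apply Finset.card_le_card_of_injOn (fun S' => S' \ A)
  · intro S' h
    simp only [Finset.coe_filter, Finset.mem_powersetCard, Set.mem_ofPred_eq] at h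
    simp only [Finset.mem_coe, Finset.mem_powersetCard]
    refine ⟨Finset.sdiff_subset_sdiff h.1.1 subset_rfl, ?_⟩
    rw [Finset.card_sdiff_of_subset h.2, h.1.2]
  · intro S h S' h' e
    simp only [Finset.coe_filter, Set.mem_ofPred_eq] at h h'
    simp only at e
    rw [← Finset.sdiff_union_of_subset h.2, e, Finset.sdiff_union_of_subset h'.2]

lemma inner_aux (z s : ℕ) (hs : 1 ≤ s) (hsz : s ≤ z) (t : ℝ) (ht : 1 ≤ t)
    (S : Finset ℕ) (hS : S ∈ (Finset.range z).powersetCard s) :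
    ∑ S' ∈ (Finset.range z).powersetCard s, t ^ (S ∩ S').card
      ≤ (z.choose s : ℝ) * Real.exp ((s ^ 2 / z) * (t - 1)) := by
  obtain ⟨hSz, hSc⟩ := Finset.mem_powersetCard.1 hS
  have hz : (0 : ℝ) < z := by exact_mod_cast (by omega : 0 < z)
  have key : ∀ S' : Finset ℕ, t ^ (S ∩ S').card
      = ∑ A ∈ S.powerset, if A ⊆ S' then (t - 1) ^ A.card else 0 := by
    intro S'
    have h := Finset.sum_pow_mul_eq_add_pow (t - 1) 1 (S ∩ S')
    simp only [one_pow, mul_one, sub_add_cancel] at h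
    rw [← h, ← Finset.sum_filter]
    apply Finset.sum_congr _ (fun _ _ => rfl)
    ext A
    simp only [Finset.mem_powerset, Finset.mem_filter, Finset.subset_inter_iff]
  simp_rw [key]
  rw [Finset.sum_comm]
  have step : ∀ A ∈ S.powerset,
      (∑ S' ∈ (Finset.range z).powersetCard s, if A ⊆ S' then (t - 1) ^ A.card else 0)
        ≤ (z.choose s : ℝ) * ((s / z * (t - 1)) ^ A.card) := by
    intro A hA
    rw [Finset.mem_powerset] at hA
    rw [← Finset.sum_filter, Finset.sum_const, nsmul_eq_mul, mul_pow, ← mul_assoc]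
    apply mul_le_mul_of_nonneg_right _ (pow_nonneg (by linarith) _)
    have h1 := count_aux z s A (hA.trans hSz)
    have h2 := choose_aux z s hsz A.card (hSc ▸ Finset.card_le_card hA)
    rw [div_pow, ← mul_div_assoc, le_div_iff₀ (by positivity)]
    exact_mod_cast (Nat.mul_le_mul_right _ h1).trans h2
  refine (Finset.sum_le_sum step).trans ?_
  rw [← Finset.mul_sum]
  apply mul_le_mul_of_nonneg_left _ (by positivity)
  have h := Finset.sum_pow_mul_eq_add_pow ((s / z * (t - 1) : ℝ)) 1 S
  simp only [one_pow, mul_one] at h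
  rw [h, hSc]
  have ht' : 0 ≤ t - 1 := by linarith
  calc _ ≤ (Real.exp (s / z * (t - 1))) ^ s :=
        pow_le_pow_left₀ (by positivity) (Real.add_one_le_exp _) _
    _ = _ := by rw [← Real.exp_nat_mul]; congr 1; ring

theorem stmt15 (z s : ℕ) (hs : 1 ≤ s) (hsz : s ≤ z) (t : ℝ) (ht : 1 ≤ t) :
    (1 / (z.choose s : ℝ) ^ 2) *
      ∑ S ∈ (Finset.range z).powersetCard s, ∑ S' ∈ (Finset.range z).powersetCard s,
        t ^ (S ∩ S').card
    ≤ Real.exp ((s ^ 2 / z) * (t - 1)) := by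
  have hc : (0 : ℝ) < z.choose s := by exact_mod_cast Nat.choose_pos hsz
  have h := Finset.sum_le_sum (inner_aux z s hs hsz t ht)
  rw [Finset.sum_const, Finset.card_powersetCard, Finset.card_range, nsmul_eq_mul] at h
  rw [one_div, inv_mul_le_iff₀ (by positivity)]
  refine h.trans (le_of_eq ?_)
  ring
end

section
/- Fix integers n ≥ 1, z ≥ 1, 1 ≤ s ≤ z and a real δ ∈ (0,1/2). If 4nδ²/z ≤ 1 and n²s²δ⁴/z³ ≤ 1/32, then χ²(Q, P_0) ≤ 32·n²·s²·δ⁴/z³. -/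
/-- Heads/tails probability of coin `i` under the alternative model with biased set `S`
and signs `σ` (with `σ i = true` meaning sign +1): a toss of coin `i` comes up `y`. -/
noncomputable def pCoin (z : ℕ) (δ : ℝ) (S : Finset (Fin z)) (σ : Fin z → Bool)
    (i : Fin z) (y : Bool) : ℝ :=
  if y then 1 / 2 + (if σ i then δ else -δ) * (if i ∈ S then 1 else 0)
  else 1 / 2 - (if σ i then δ else -δ) * (if i ∈ S then 1 else 0)

/-- Null model: each round an independent uniform coin is tossed, all coins fair. -/
noncomputable def Pnull (n z : ℕ) (_ω : Fin n → Fin z × Bool) : ℝ :=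
  ∏ _t : Fin n, (1 / (z : ℝ)) * (1 / 2)

/-- Law of the data under a fixed biased set `S` and signs `σ`. -/
noncomputable def PAlt (n z : ℕ) (δ : ℝ) (S : Finset (Fin z)) (σ : Fin z → Bool)
    (ω : Fin n → Fin z × Bool) : ℝ :=
  ∏ t : Fin n, (1 / (z : ℝ)) * pCoin z δ S σ (ω t).1 (ω t).2

/-- Uniform mixture of `PAlt` over all size-`s` subsets `S` and all sign vectors `σ`. -/
noncomputable def Qmix (n z s : ℕ) (δ : ℝ) (ω : Fin n → Fin z × Bool) : ℝ :=
  (1 / (z.choose s : ℝ)) * (1 / 2 ^ z) *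
    ∑ S ∈ (Finset.univ : Finset (Fin z)).powersetCard s,
      ∑ σ : Fin z → Bool, PAlt n z δ S σ ω

noncomputable def dev (z : ℕ) (δ : ℝ) (S : Finset (Fin z)) (σ : Fin z → Bool) (i : Fin z) : ℝ :=
  (if σ i then δ else -δ) * (if i ∈ S then 1 else 0)

lemma sum_prod_pow (n z : ℕ) (f : Fin z × Bool → ℝ) :
    ∑ ω : Fin n → Fin z × Bool, ∏ t, f (ω t) = (∑ i, (f (i, true) + f (i, false))) ^ n := by
  have h := (Finset.prod_univ_sum (fun _ : Fin n => (Finset.univ : Finset (Fin z × Bool)))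
    (fun _ x => f x))
  rw [Fintype.piFinset_univ] at h
  rw [← h, Finset.prod_const, Finset.card_univ, Fintype.card_fin, Fintype.sum_prod_type]
  simp

lemma sum_PAlt (n z : ℕ) (hz : 1 ≤ z) (δ : ℝ) (S : Finset (Fin z)) (σ : Fin z → Bool) :
    ∑ ω, PAlt n z δ S σ ω = 1 := by
  have hz' : (z : ℝ) ≠ 0 := by positivity
  unfold PAlt
  rw [sum_prod_pow n z (fun x => (1 / (z : ℝ)) * pCoin z δ S σ x.1 x.2)]
  have : ∀ i, (1 / (z : ℝ)) * pCoin z δ S σ i true + (1 / (z : ℝ)) * pCoin z δ S σ i false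
      = 1 / z := by
    intro i; simp only [pCoin, if_true, Bool.false_eq_true, if_false]; ring
  simp only [this]
  simp [hz']

lemma sum_Pnull (n z : ℕ) (hz : 1 ≤ z) : ∑ ω, Pnull n z ω = 1 := by
  have hz' : (z : ℝ) ≠ 0 := by positivity
  unfold Pnull
  rw [sum_prod_pow n z (fun x => (1 / (z : ℝ)) * (1 / 2))]
  have : (1 / (z : ℝ)) * (1 / 2) + (1 / (z : ℝ)) * (1 / 2) = 1 / z := by ring
  simp only [this]
  simp [hz']

lemma cross (n z : ℕ) (hz : 1 ≤ z) (δ : ℝ) (S S' : Finset (Fin z)) (σ σ' : Fin z → Bool) :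
    ∑ ω, PAlt n z δ S σ ω * PAlt n z δ S' σ' ω / Pnull n z ω
      = (1 + 4 / z * ∑ i, dev z δ S σ i * dev z δ S' σ' i) ^ n := by
  have hz' : (z : ℝ) ≠ 0 := by positivity
  have e : ∀ ω, PAlt n z δ S σ ω * PAlt n z δ S' σ' ω / Pnull n z ω
      = ∏ t, ((fun x : Fin z × Bool =>
          2 / (z : ℝ) * (pCoin z δ S σ x.1 x.2 * pCoin z δ S' σ' x.1 x.2)) (ω t)) := by
    intro ω
    unfold PAlt Pnull
    rw [← Finset.prod_mul_distrib, ← Finset.prod_div_distrib]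
    refine Finset.prod_congr rfl fun t _ => ?_
    field_simp
  rw [Finset.sum_congr rfl fun ω _ => e ω, sum_prod_pow n z (fun x : Fin z × Bool =>
    2 / (z : ℝ) * (pCoin z δ S σ x.1 x.2 * pCoin z δ S' σ' x.1 x.2))]
  congr 1
  have : ∀ i, 2 / (z : ℝ) * (pCoin z δ S σ i true * pCoin z δ S' σ' i true)
      + 2 / (z : ℝ) * (pCoin z δ S σ i false * pCoin z δ S' σ' i false)
      = 1 / z + 4 / z * (dev z δ S σ i * dev z δ S' σ' i) := by
    intro i; simp only [pCoin, dev, if_true, Bool.false_eq_true, if_false]; ring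
  simp only [this]
  rw [Finset.sum_add_distrib, ← Finset.mul_sum]
  simp [hz']

lemma exp_le_lin (x : ℝ) (h0 : 0 ≤ x) (h1 : x ≤ 1 / 2) : Real.exp x ≤ 1 + 2 * x := by
  refine (Real.exp_bound_div_one_sub_of_interval h0 (by linarith)).trans ?_
  rw [div_le_iff₀ (by linarith)]
  nlinarith

lemma sum_sign (n z : ℕ) (hz : 1 ≤ z) (δ : ℝ) (hδ0 : 0 < δ) (hδ : δ < 1 / 2)
    (h1 : 4 * n * δ ^ 2 / z ≤ 1) (S S' : Finset (Fin z)) (σ' : Fin z → Bool) :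
    ∑ σ, (1 + 4 / z * ∑ i, dev z δ S σ i * dev z δ S' σ' i) ^ n
      ≤ 2 ^ z * (1 + (4 * n * δ ^ 2 / z) ^ 2) ^ (S ∩ S').card := by
  have hz' : (0 : ℝ) < z := by positivity
  set b : ℝ := 4 * n * δ ^ 2 / z with hb
  have hb0 : 0 ≤ b := by positivity
  have key : ∀ σ, (1 + 4 / z * ∑ i, dev z δ S σ i * dev z δ S' σ' i) ^ n
      ≤ ∏ i, Real.exp (4 * n / z * (dev z δ S σ i * dev z δ S' σ' i)) := by
    intro σ
    rw [← Real.exp_sum, ← Finset.mul_sum]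
    have hlow : -((z : ℝ) * δ ^ 2) ≤ ∑ i, dev z δ S σ i * dev z δ S' σ' i := by
      have : ∑ i : Fin z, (-(δ ^ 2)) ≤ ∑ i, dev z δ S σ i * dev z δ S' σ' i := by
        refine Finset.sum_le_sum fun i _ => ?_
        unfold dev
        split_ifs <;> nlinarith [sq_nonneg δ]
      simpa using this
    set w := ∑ i, dev z δ S σ i * dev z δ S' σ' i
    have h0 : 0 ≤ 1 + 4 / z * w := by
      have : 4 / (z : ℝ) * (-((z : ℝ) * δ ^ 2)) ≤ 4 / z * w :=
        mul_le_mul_of_nonneg_left hlow (by positivity)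
      have e : 4 / (z : ℝ) * (-((z : ℝ) * δ ^ 2)) = -4 * δ ^ 2 := by field_simp
      nlinarith
    calc (1 + 4 / z * w) ^ n ≤ (Real.exp (4 / z * w)) ^ n := by
          gcongr
          linarith [Real.add_one_le_exp (4 / z * w)]
      _ = _ := by rw [← Real.exp_nat_mul]; congr 1; ring
  refine (Finset.sum_le_sum fun σ _ => key σ).trans ?_
  have h := (Finset.prod_univ_sum (fun _ : Fin z => (Finset.univ : Finset Bool))
    (fun i y => Real.exp (4 * n / z * (((if y then δ else -δ) * (if i ∈ S then 1 else 0))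
      * dev z δ S' σ' i))))
  rw [Fintype.piFinset_univ] at h
  unfold dev at h ⊢
  rw [← h]
  have hc : Real.exp b + Real.exp (-b) ≤ 2 * (1 + b ^ 2) := by
    have h2 := Real.cosh_le_exp_half_sq b
    have h3 := exp_le_lin (b ^ 2 / 2) (by positivity) (by nlinarith)
    rw [Real.cosh_eq] at h2
    linarith
  have e : (2 : ℝ) ^ z * (1 + b ^ 2) ^ (S ∩ S').card
      = ∏ i : Fin z, (2 * if i ∈ S ∩ S' then (1 + b ^ 2) else 1) := by
    rw [Finset.prod_mul_distrib, Finset.prod_ite_mem, Finset.univ_inter]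
    simp
  rw [e]
  refine Finset.prod_le_prod (fun i _ => Finset.sum_nonneg fun y _ => (Real.exp_pos _).le) ?_
  intro i _
  rw [Fintype.sum_bool]
  have e1 : 4 * (n : ℝ) / z * (δ * δ) = b := by rw [hb]; ring
  have e2 : 4 * (n : ℝ) / z * (-δ * δ) = -b := by rw [hb]; ring
  have e3 : 4 * (n : ℝ) / z * (δ * -δ) = -b := by rw [hb]; ring
  have e4 : 4 * (n : ℝ) / z * (-δ * -δ) = b := by rw [hb]; ring
  by_cases hS : i ∈ S <;> by_cases hS' : i ∈ S' <;> by_cases hσ : σ' i = true <;>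
    simp [hS, hS', hσ, -mul_neg, -neg_mul, e1, e2, e3, e4] <;> linarith

lemma choose_ratio (t : ℕ) : ∀ z s : ℕ, t ≤ s → s ≤ z →
    (z - t).choose (s - t) * z ^ t ≤ s ^ t * z.choose s := by
  induction t with
  | zero => intro z s _ _; simp
  | succ t ih =>
    intro z s hts hsz
    obtain ⟨s, rfl⟩ : ∃ k, s = k + 1 := ⟨s - 1, by omega⟩
    obtain ⟨z, rfl⟩ : ∃ k, z = k + 1 := ⟨z - 1, by omega⟩
    have h := ih z s (by omega) (by omega)
    rw [Nat.add_sub_add_right, Nat.add_sub_add_right]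
    have hc := Nat.add_one_mul_choose_eq z s
    by_cases hz : z = 0
    · subst hz
      obtain rfl : s = 0 := by omega
      simp
    have hz' : 0 < z ^ t := by positivity
    have hr : (s * (z + 1)) ^ t ≤ ((s + 1) * z) ^ t := by
      apply Nat.pow_le_pow_left; nlinarith
    refine Nat.le_of_mul_le_mul_left (c := z ^ t) ?_ hz'
    calc z ^ t * ((z - t).choose (s - t) * (z + 1) ^ (t + 1))
        = ((z - t).choose (s - t) * z ^ t) * (z + 1) ^ (t + 1) := by ring
      _ ≤ (s ^ t * z.choose s) * (z + 1) ^ (t + 1) := Nat.mul_le_mul_right _ h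
      _ = (s * (z + 1)) ^ t * ((z + 1) * z.choose s) := by rw [mul_pow]; ring
      _ ≤ ((s + 1) * z) ^ t * ((z + 1) * z.choose s) := Nat.mul_le_mul_right _ hr
      _ = z ^ t * ((s + 1) ^ (t + 1) * (z + 1).choose (s + 1)) := by
        rw [hc, mul_pow]; ring

lemma count_sup (z s : ℕ) (T : Finset (Fin z)) (hT : T.card ≤ s) :
    (((Finset.univ : Finset (Fin z)).powersetCard s).filter (fun S => T ⊆ S)).card
      ≤ (z - T.card).choose (s - T.card) := by
  have : (z - T.card).choose (s - T.card) = ((Tᶜ).powersetCard (s - T.card)).card := by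
    rw [Finset.card_powersetCard, Finset.card_compl, Fintype.card_fin]
  rw [this]
  refine Finset.card_le_card_of_injOn (fun S => S \ T) ?_ ?_
  · intro S hS
    simp only [Finset.coe_filter, Finset.mem_powersetCard, Set.mem_ofPred_eq] at hS
    simp only [Finset.mem_coe, Finset.mem_powersetCard]
    refine ⟨?_, ?_⟩
    · intro x hx; simp at hx ⊢; exact hx.2
    · rw [Finset.card_sdiff_of_subset hS.2, hS.1.2]
  · intro S hS S' hS' h
    simp only [Finset.coe_filter, Finset.mem_powersetCard, Set.mem_ofPred_eq] at hS hS'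
    simp only at h
    rw [← Finset.sdiff_union_of_subset hS.2, h, Finset.sdiff_union_of_subset hS'.2]

lemma sum_sets (z s : ℕ) (hz : 1 ≤ z) (hsz : s ≤ z) (θ : ℝ) (hθ : 0 ≤ θ) (S' : Finset (Fin z))
    (hS' : S'.card = s) :
    ∑ S ∈ (Finset.univ : Finset (Fin z)).powersetCard s, (1 + θ) ^ (S ∩ S').card
      ≤ z.choose s * (1 + θ * s / z) ^ s := by
  have hz' : (0 : ℝ) < z := by positivity
  have ex : ∀ (U : Finset (Fin z)) (a : ℝ), (1 + a) ^ U.card = ∑ T ∈ U.powerset, a ^ T.card := by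
    intro U a
    have := Finset.sum_pow_mul_eq_add_pow a 1 U
    simp only [one_pow, mul_one] at this
    rw [this, add_comm]
  have e1 : ∀ S : Finset (Fin z), (1 + θ) ^ (S ∩ S').card
      = ∑ T ∈ S'.powerset, if T ⊆ S then θ ^ T.card else 0 := by
    intro S
    rw [ex, ← Finset.sum_filter]
    refine Finset.sum_congr ?_ fun _ _ => rfl
    ext T
    rw [Finset.mem_powerset, Finset.mem_filter, Finset.mem_powerset, Finset.subset_inter_iff, and_comm]
  rw [Finset.sum_congr rfl fun S _ => e1 S, Finset.sum_comm, ← hS', ex, Finset.mul_sum, hS']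
  refine Finset.sum_le_sum fun T hT => ?_
  rw [Finset.mem_powerset] at hT
  have hTs : T.card ≤ s := hS' ▸ Finset.card_le_card hT
  rw [← Finset.sum_filter, Finset.sum_const, nsmul_eq_mul]
  have h1 := count_sup z s T hTs
  have h2 := choose_ratio T.card z s hTs hsz
  have h3 : (((((Finset.univ : Finset (Fin z)).powersetCard s).filter
      (fun S => T ⊆ S)).card : ℕ) : ℝ) * z ^ T.card ≤ s ^ T.card * z.choose s := by
    exact_mod_cast (Nat.mul_le_mul_right _ h1).trans h2
  rw [div_pow, mul_pow, mul_div_assoc', le_div_iff₀ (by positivity)]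
  have := mul_le_mul_of_nonneg_left h3 (pow_nonneg hθ T.card)
  linarith

theorem stmt16 (n z s : ℕ) (hn : 1 ≤ n) (hz : 1 ≤ z) (hs : 1 ≤ s) (hsz : s ≤ z)
    (δ : ℝ) (hδ0 : 0 < δ) (hδ : δ < 1 / 2)
    (h1 : 4 * n * δ ^ 2 / z ≤ 1)
    (h2 : (n : ℝ) ^ 2 * s ^ 2 * δ ^ 4 / z ^ 3 ≤ 1 / 32) :
    ∑ ω : Fin n → Fin z × Bool,
        (Qmix n z s δ ω - Pnull n z ω) ^ 2 / Pnull n z ω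
      ≤ 32 * n ^ 2 * s ^ 2 * δ ^ 4 / z ^ 3 := by
  have hz' : (0 : ℝ) < z := by positivity
  have hC : (0 : ℝ) < z.choose s := by exact_mod_cast Nat.choose_pos hsz
  have hP : ∀ ω, 0 < Pnull n z ω := by
    intro ω; unfold Pnull; positivity
  set J := (Finset.univ : Finset (Fin z)).powersetCard s with hJ
  have hJc : (J.card : ℝ) = z.choose s := by
    rw [hJ, Finset.card_powersetCard, Finset.card_univ, Fintype.card_fin]
  set c : ℝ := (1 / (z.choose s : ℝ)) * (1 / 2 ^ z) with hc
  have hc0 : 0 < c := by positivity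
  have hcN : c * (z.choose s * 2 ^ z) = 1 := by rw [hc]; field_simp
  have hQ1 : ∑ ω, Qmix n z s δ ω = 1 := by
    unfold Qmix
    rw [← Finset.mul_sum, Finset.sum_comm]
    have : ∀ S ∈ J, ∑ ω, ∑ σ : Fin z → Bool, PAlt n z δ S σ ω = 2 ^ z := by
      intro S _
      rw [Finset.sum_comm]
      simp [sum_PAlt n z hz]
    rw [Finset.sum_congr rfl this, Finset.sum_const, nsmul_eq_mul, hJc]
    exact hcN
  have hsq : ∑ ω, (Qmix n z s δ ω - Pnull n z ω) ^ 2 / Pnull n z ω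
      = ∑ ω, Qmix n z s δ ω * Qmix n z s δ ω / Pnull n z ω - 1 := by
    have : ∀ ω, (Qmix n z s δ ω - Pnull n z ω) ^ 2 / Pnull n z ω
        = Qmix n z s δ ω * Qmix n z s δ ω / Pnull n z ω - 2 * Qmix n z s δ ω + Pnull n z ω := by
      intro ω
      have := (hP ω).ne'
      field_simp
      ring
    rw [Finset.sum_congr rfl fun ω _ => this ω, Finset.sum_add_distrib, Finset.sum_sub_distrib,
      ← Finset.mul_sum, hQ1, sum_Pnull n z hz]
    ring
  set b : ℝ := 4 * n * δ ^ 2 / z with hb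
  have hQ2 : ∑ ω, Qmix n z s δ ω * Qmix n z s δ ω / Pnull n z ω
      = c * c * ∑ S' ∈ J, ∑ σ' : Fin z → Bool, ∑ S ∈ J, ∑ σ : Fin z → Bool,
        (1 + 4 / z * ∑ i, dev z δ S σ i * dev z δ S' σ' i) ^ n := by
    have : ∀ ω, Qmix n z s δ ω * Qmix n z s δ ω / Pnull n z ω
        = c * c * ∑ S' ∈ J, ∑ σ' : Fin z → Bool, ∑ S ∈ J, ∑ σ : Fin z → Bool,
          PAlt n z δ S σ ω * PAlt n z δ S' σ' ω / Pnull n z ω := by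
      intro ω
      unfold Qmix
      simp only [← Finset.sum_div, ← Finset.sum_mul, ← Finset.mul_sum]
      rw [← hc]
      ring
    rw [Finset.sum_congr rfl fun ω _ => this ω, ← Finset.mul_sum]
    congr 1
    rw [Finset.sum_comm]
    refine Finset.sum_congr rfl fun S' _ => ?_
    rw [Finset.sum_comm]
    refine Finset.sum_congr rfl fun σ' _ => ?_
    rw [Finset.sum_comm]
    refine Finset.sum_congr rfl fun S _ => ?_
    rw [Finset.sum_comm]
    exact Finset.sum_congr rfl fun σ _ => cross n z hz δ S S' σ σ'
  have hbound : ∑ S' ∈ J, ∑ σ' : Fin z → Bool, ∑ S ∈ J, ∑ σ : Fin z → Bool,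
        (1 + 4 / z * ∑ i, dev z δ S σ i * dev z δ S' σ' i) ^ n
      ≤ (z.choose s * 2 ^ z) * (z.choose s * 2 ^ z) * (1 + b ^ 2 * s / z) ^ s := by
    have : ∀ S' ∈ J, ∑ σ' : Fin z → Bool, ∑ S ∈ J, ∑ σ : Fin z → Bool,
        (1 + 4 / z * ∑ i, dev z δ S σ i * dev z δ S' σ' i) ^ n
        ≤ 2 ^ z * (2 ^ z * (z.choose s * (1 + b ^ 2 * s / z) ^ s)) := by
      intro S' hS'
      have h : ∀ σ' ∈ (Finset.univ : Finset (Fin z → Bool)), ∑ S ∈ J, ∑ σ : Fin z → Bool,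
          (1 + 4 / z * ∑ i, dev z δ S σ i * dev z δ S' σ' i) ^ n
          ≤ 2 ^ z * (z.choose s * (1 + b ^ 2 * s / z) ^ s) := by
        intro σ' _
        refine (Finset.sum_le_sum fun S _ => sum_sign n z hz δ hδ0 hδ h1 S S' σ').trans ?_
        rw [← Finset.mul_sum]
        refine mul_le_mul_of_nonneg_left ?_ (by positivity)
        exact sum_sets z s hz hsz (b ^ 2) (by positivity) S' (Finset.mem_powersetCard.1 hS').2
      refine (Finset.sum_le_sum h).trans (le_of_eq ?_)
      simp
    refine (Finset.sum_le_sum this).trans (le_of_eq ?_)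
    rw [Finset.sum_const, nsmul_eq_mul, hJc]
    ring
  have hfin : (1 + b ^ 2 * s / z) ^ s ≤ 1 + 32 * n ^ 2 * s ^ 2 * δ ^ 4 / z ^ 3 := by
    have hu : (s : ℝ) * (b ^ 2 * s / z) = 16 * (n ^ 2 * s ^ 2 * δ ^ 4 / z ^ 3) := by
      rw [hb]; field_simp; ring
    have h0 : (0 : ℝ) ≤ n ^ 2 * s ^ 2 * δ ^ 4 / z ^ 3 := by positivity
    calc (1 + b ^ 2 * s / z) ^ s ≤ (Real.exp (b ^ 2 * s / z)) ^ s := by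
          gcongr
          linarith [Real.add_one_le_exp (b ^ 2 * s / z)]
      _ = Real.exp (16 * (n ^ 2 * s ^ 2 * δ ^ 4 / z ^ 3)) := by rw [← Real.exp_nat_mul, hu]
      _ ≤ 1 + 2 * (16 * (n ^ 2 * s ^ 2 * δ ^ 4 / z ^ 3)) :=
          exp_le_lin _ (by linarith) (by linarith)
      _ = _ := by ring
  rw [hsq, hQ2]
  have := mul_le_mul_of_nonneg_left hbound (mul_pos hc0 hc0).le
  have e : c * c * ((z.choose s * 2 ^ z) * (z.choose s * 2 ^ z) * (1 + b ^ 2 * s / z) ^ s)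
      = (c * (z.choose s * 2 ^ z)) * (c * (z.choose s * 2 ^ z)) * (1 + b ^ 2 * s / z) ^ s := by
    ring
  rw [e, hcN] at this
  linarith
end

section
/- Let d ≥ 1 be an integer, β ∈ (0,1], L > 0, w > 0 and q ∈ ℝ^d. Define D_φ = min(4^{−β}·L, 1/4) and ξ(x) = D_φ·w^{−β}·φ( w·‖x − q‖_∞ )^β for x ∈ ℝ^d. Then ξ is (β, L)-Hölder with respect to the Euclidean norm: for all x, y ∈ ℝ^d, |ξ(x) − ξ(y)| ≤ L·‖x − y‖_2^β. Moreover, ξ takes values in [0, D_φ·w^{−β}], equals D_φ·w^{−β} on the set { x : w·‖x − q‖_∞ < 1/4 }, and vanishes on the set { x : w·‖x − q‖_∞ ≥ 1/2 }. -/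
/-- The bump function φ: φ(r) = 1 for r < 1/4, φ(r) = 2 − 4r for 1/4 ≤ r < 1/2,
φ(r) = 0 for r ≥ 1/2. -/
noncomputable def bump (r : ℝ) : ℝ :=
  if r < 1 / 4 then 1 else if r < 1 / 2 then 2 - 4 * r else 0

/-- D_φ = min(4^{−β}·L, 1/4). -/
noncomputable def Dphi (β L : ℝ) : ℝ := min ((4 : ℝ) ^ (-β) * L) (1 / 4)

/-- ξ(x) = D_φ · w^{−β} · φ(w·‖x − q‖_∞)^β, where ‖·‖_∞ is the sup norm of coordinates. -/
noncomputable def xiFun (d : ℕ) (β L w : ℝ) (q : EuclideanSpace ℝ (Fin d))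
    (x : EuclideanSpace ℝ (Fin d)) : ℝ :=
  Dphi β L * w ^ (-β) * (bump (w * ⨆ i, |x i - q i|)) ^ β

theorem bump_nonneg (r : ℝ) : 0 ≤ bump r := by
  unfold bump; split_ifs <;> linarith

theorem bump_le_one (r : ℝ) : bump r ≤ 1 := by
  unfold bump; split_ifs <;> linarith

theorem bump_sub_le (r s : ℝ) : bump r - bump s ≤ 4 * |r - s| := by
  have h1 := neg_abs_le (r - s)
  have h2 := abs_nonneg (r - s)
  unfold bump; split_ifs <;> linarith

theorem sup_sub_le {d : ℕ} (hd : 1 ≤ d) (q x y : EuclideanSpace ℝ (Fin d)) :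
    (⨆ i, |x i - q i|) - (⨆ i, |y i - q i|) ≤ ‖x - y‖ := by
  haveI : Nonempty (Fin d) := ⟨⟨0, hd⟩⟩
  rw [sub_le_iff_le_add]
  apply ciSup_le
  intro i
  have h1 : |y i - q i| ≤ ⨆ i, |y i - q i| :=
    le_ciSup (f := fun i => |y i - q i|) (Set.finite_range _).bddAbove i
  have h2 : |x i - y i| ≤ ‖x - y‖ := by
    simpa using PiLp.norm_apply_le (x - y) i
  have h3 := abs_sub_le (x i) (y i) (q i)
  linarith

theorem rpow_sub_le {a b c β : ℝ} (ha : 0 ≤ a) (hb : 0 ≤ b) (hc : 0 ≤ c) (h : a - b ≤ c)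
    (hβ0 : 0 < β) (hβ1 : β ≤ 1) : a ^ β - b ^ β ≤ c ^ β := by
  have h1 : a ^ β ≤ (c + b) ^ β := Real.rpow_le_rpow ha (by linarith) hβ0.le
  have h2 := Real.rpow_add_le_add_rpow hc hb hβ0.le hβ1
  linarith

theorem Dphi_nonneg (β L : ℝ) (hL : 0 < L) : 0 ≤ Dphi β L := by
  unfold Dphi; positivity

theorem xi_sub_le (d : ℕ) (hd : 1 ≤ d) (β L w : ℝ) (hβ0 : 0 < β) (hβ1 : β ≤ 1)
    (hL : 0 < L) (hw : 0 < w) (q x y : EuclideanSpace ℝ (Fin d)) :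
    xiFun d β L w q x - xiFun d β L w q y ≤ L * ‖x - y‖ ^ β := by
  unfold xiFun
  set s := ⨆ i, |x i - q i| with hs
  set t := ⨆ i, |y i - q i| with ht
  have hst : |s - t| ≤ ‖x - y‖ := by
    rw [abs_le]
    have h1 := sup_sub_le hd q x y
    have h2 := sup_sub_le hd q y x
    rw [norm_sub_rev] at h2
    constructor <;> linarith
  have hb : bump (w * s) - bump (w * t) ≤ 4 * (w * ‖x - y‖) := by
    refine (bump_sub_le _ _).trans ?_
    rw [← mul_sub, abs_mul, abs_of_pos hw]
    gcongr
  have hr := rpow_sub_le (bump_nonneg _) (bump_nonneg _) (by positivity) hb hβ0 hβ1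
  rw [Real.mul_rpow (by norm_num) (by positivity), Real.mul_rpow hw.le (norm_nonneg _)] at hr
  have hD := Dphi_nonneg β L hL
  have hD' : Dphi β L ≤ (4 : ℝ) ^ (-β) * L := min_le_left _ _
  have hwc : w ^ (-β) * w ^ β = 1 := by rw [← Real.rpow_add hw]; simp
  have h4c : (4 : ℝ) ^ (-β) * 4 ^ β = 1 := by rw [← Real.rpow_add (by norm_num)]; simp
  calc _ = Dphi β L * w ^ (-β) * (bump (w * s) ^ β - bump (w * t) ^ β) := by ring
    _ ≤ Dphi β L * w ^ (-β) * (4 ^ β * (w ^ β * ‖x - y‖ ^ β)) := by gcongr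
    _ ≤ ((4 : ℝ) ^ (-β) * L) * w ^ (-β) * (4 ^ β * (w ^ β * ‖x - y‖ ^ β)) := by gcongr
    _ = ((4 : ℝ) ^ (-β) * 4 ^ β) * (w ^ (-β) * w ^ β) * (L * ‖x - y‖ ^ β) := by ring
    _ = _ := by rw [hwc, h4c]; ring

theorem stmt18 (d : ℕ) (hd : 1 ≤ d) (β L w : ℝ) (hβ0 : 0 < β) (hβ1 : β ≤ 1)
    (hL : 0 < L) (hw : 0 < w) (q : EuclideanSpace ℝ (Fin d)) :
    (∀ x y : EuclideanSpace ℝ (Fin d),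
      |xiFun d β L w q x - xiFun d β L w q y| ≤ L * ‖x - y‖ ^ β) ∧
    (∀ x : EuclideanSpace ℝ (Fin d),
      xiFun d β L w q x ∈ Set.Icc (0 : ℝ) (Dphi β L * w ^ (-β))) ∧
    (∀ x : EuclideanSpace ℝ (Fin d),
      w * (⨆ i, |x i - q i|) < 1 / 4 → xiFun d β L w q x = Dphi β L * w ^ (-β)) ∧
    (∀ x : EuclideanSpace ℝ (Fin d),
      1 / 2 ≤ w * (⨆ i, |x i - q i|) → xiFun d β L w q x = 0) := by
  have hD := Dphi_nonneg β L hL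
  have hw' : 0 ≤ w ^ (-β) := by positivity
  refine ⟨fun x y => ?_, fun x => ⟨?_, ?_⟩, fun x hx => ?_, fun x hx => ?_⟩
  · rw [abs_le]
    have h1 := xi_sub_le d hd β L w hβ0 hβ1 hL hw q x y
    have h2 := xi_sub_le d hd β L w hβ0 hβ1 hL hw q y x
    rw [norm_sub_rev] at h2
    constructor <;> linarith
  · exact mul_nonneg (mul_nonneg hD hw') (Real.rpow_nonneg (bump_nonneg _) _)
  · exact mul_le_of_le_one_right (mul_nonneg hD hw')
      (Real.rpow_le_one (bump_nonneg _) (bump_le_one _) hβ0.le)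
  · simp only [xiFun, bump, if_pos hx, Real.one_rpow, mul_one]
  · have h1 : ¬ (w * (⨆ i, |x i - q i|) < 1 / 4) := by linarith
    have h2 : ¬ (w * (⨆ i, |x i - q i|) < 1 / 2) := by linarith
    simp only [xiFun, bump, if_neg h1, if_neg h2, Real.zero_rpow hβ0.ne', mul_zero]
end

section
/- For every integer M ≥ 2, the function h_M(γ) = (1−γ)/(1−γ^M) is strictly decreasing and strictly convex on the interval (0,1). -/
theorem aux_P (n : ℕ) (g : ℝ) (h0 : 0 < g) (h1 : g < 1) :
    0 < 1 - (n + 2) * g ^ (n + 1) + (n + 1) * g ^ (n + 2) := by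
  induction n with
  | zero => norm_num; nlinarith [mul_pos (sub_pos.2 h1) (sub_pos.2 h1)]
  | succ n ih =>
    have : 0 ≤ ((n : ℝ) + 2) * g ^ (n + 1) * (1 - g) ^ 2 := by positivity
    push_cast
    have e : 1 - ((n : ℝ) + 1 + 2) * g ^ (n + 1 + 1) + (n + 1 + 1) * g ^ (n + 1 + 2)
      = (1 - (n + 2) * g ^ (n + 1) + (n + 1) * g ^ (n + 2))
        + ((n : ℝ) + 2) * g ^ (n + 1) * (1 - g) ^ 2 := by ring
    rw [e]; linarith

theorem aux_B (n : ℕ) (g : ℝ) (h0 : 0 < g) (h1 : g < 1) :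
    0 < (n + 1) - (n + 2) * g + g ^ (n + 2) := by
  induction n with
  | zero => norm_num; nlinarith [mul_pos (sub_pos.2 h1) (sub_pos.2 h1)]
  | succ n ih =>
    have h2 : g ^ (n + 2) < 1 := pow_lt_one₀ h0.le h1 (by omega)
    push_cast
    have e : ((n : ℝ) + 1 + 1) - (n + 1 + 2) * g + g ^ (n + 1 + 2)
      = ((n + 1) - (n + 2) * g + g ^ (n + 2)) + (1 - g) * (1 - g ^ (n + 2)) := by ring
    rw [e]
    have := mul_pos (sub_pos.2 h1) (sub_pos.2 h2)
    linarith

theorem aux_Q (n : ℕ) (g : ℝ) (h0 : 0 < g) (h1 : g < 1) :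
    0 < (n + 1) - (n + 3) * g + (n + 3) * g ^ (n + 2) - (n + 1) * g ^ (n + 3) := by
  induction n with
  | zero =>
    have := pow_pos (sub_pos.2 h1) 3
    norm_num; nlinarith
  | succ n ih =>
    have := mul_pos (sub_pos.2 h1) (aux_B (n + 1) g h0 h1)
    have h3 := mul_pos h0 ih
    push_cast at *
    have e : ((n : ℝ) + 1 + 1) - (n + 1 + 3) * g + (n + 1 + 3) * g ^ (n + 1 + 2)
        - (n + 1 + 1) * g ^ (n + 1 + 3)
      = g * ((n + 1) - (n + 3) * g + (n + 3) * g ^ (n + 2) - (n + 1) * g ^ (n + 3))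
       + (1 - g) * ((n + 1 + 1) - (n + 1 + 2) * g + g ^ (n + 1 + 2)) := by ring
    rw [e]; linarith

theorem aux_d1 (n : ℕ) (g : ℝ) (h0 : 0 < g) (h1 : g < 1) :
    HasDerivAt (fun γ : ℝ => (1 - γ) / (1 - γ ^ (n + 2)))
      (-(1 - (n + 2) * g ^ (n + 1) + (n + 1) * g ^ (n + 2)) / (1 - g ^ (n + 2)) ^ 2) g := by
  have h2 : g ^ (n + 2) < 1 := pow_lt_one₀ h0.le h1 (by omega)
  have h := ((hasDerivAt_id g).const_sub 1).div ((hasDerivAt_pow (n + 2) g).const_sub 1)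
    (sub_pos.2 h2).ne'
  refine h.congr_deriv ?_
  congr 1
  simp only [id, Nat.add_succ_sub_one]
  push_cast
  ring

theorem aux_d2 (n : ℕ) (g : ℝ) (h0 : 0 < g) (h1 : g < 1) :
    HasDerivAt (fun g : ℝ =>
      -(1 - (n + 2) * g ^ (n + 1) + (n + 1) * g ^ (n + 2)) / (1 - g ^ (n + 2)) ^ 2)
      ((n + 2) * g ^ n * ((n + 1) - (n + 3) * g + (n + 3) * g ^ (n + 2) - (n + 1) * g ^ (n + 3))
        / (1 - g ^ (n + 2)) ^ 3) g := by
  have h2 : g ^ (n + 2) < 1 := pow_lt_one₀ h0.le h1 (by omega)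
  have h3 := (sub_pos.2 h2).ne'
  have h := (((((hasDerivAt_pow (n + 1) g).const_mul ((n : ℝ) + 2)).const_sub 1).add
    ((hasDerivAt_pow (n + 2) g).const_mul ((n : ℝ) + 1))).neg).div
    (((hasDerivAt_pow (n + 2) g).const_sub 1).pow 2) (pow_ne_zero 2 h3)
  refine h.congr_deriv ?_
  simp only [Nat.add_succ_sub_one, Pi.add_apply, Pi.neg_apply, Pi.pow_apply]
  rw [div_eq_div_iff (by positivity) (by positivity)]
  push_cast
  ring

theorem stmt19 (M : ℕ) (hM2 : 2 ≤ M) :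
    StrictAntiOn (fun γ : ℝ => (1 - γ) / (1 - γ ^ M)) (Set.Ioo (0 : ℝ) 1) ∧
    StrictConvexOn ℝ (Set.Ioo (0 : ℝ) 1) (fun γ : ℝ => (1 - γ) / (1 - γ ^ M)) := by
  obtain ⟨n, rfl⟩ := Nat.exists_eq_add_of_le' hM2
  have hc : ContinuousOn (fun γ : ℝ => (1 - γ) / (1 - γ ^ (n + 2))) (Set.Ioo (0 : ℝ) 1) :=
    fun g hg => (aux_d1 n g hg.1 hg.2).continuousAt.continuousWithinAt
  have hu : ∀ g ∈ Set.Ioo (0 : ℝ) 1, 0 < 1 - g ^ (n + 2) :=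
    fun g hg => sub_pos.2 (pow_lt_one₀ hg.1.le hg.2 (by omega))
  constructor
  · apply strictAntiOn_of_deriv_neg (convex_Ioo 0 1) hc
    intro g hg
    rw [interior_Ioo] at hg
    rw [(aux_d1 n g hg.1 hg.2).deriv]
    exact div_neg_of_neg_of_pos (neg_neg_of_pos (aux_P n g hg.1 hg.2)) (pow_pos (hu g hg) 2)
  · apply strictConvexOn_of_deriv2_pos (convex_Ioo 0 1) hc
    intro g hg
    rw [interior_Ioo] at hg
    have he : deriv (fun γ : ℝ => (1 - γ) / (1 - γ ^ (n + 2))) =ᶠ[nhds g] (fun g : ℝ =>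
      -(1 - (n + 2) * g ^ (n + 1) + (n + 1) * g ^ (n + 2)) / (1 - g ^ (n + 2)) ^ 2) := by
      filter_upwards [isOpen_Ioo.mem_nhds hg] with x hx
      exact (aux_d1 n x hx.1 hx.2).deriv
    show 0 < deriv (deriv (fun γ : ℝ => (1 - γ) / (1 - γ ^ (n + 2)))) g
    rw [he.deriv_eq, (aux_d2 n g hg.1 hg.2).deriv]
    have := hg.1
    exact div_pos (mul_pos (by positivity) (aux_Q n g hg.1 hg.2)) (pow_pos (hu g hg) 3)
end
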